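/- arXiv:1909.01972 — 2 statements merged into one kernel-verified Lean document; each statement's English description precedes it below -/
import Mathlib

section
/- For all R ≥ 1 and all y ∈ B_{T_d}(o,R), the random variable E_y^{T_d}[ φ_{T_d}(X_{H_{S_{T_d}(o,R)}}) ] (the expectation over the simple random walk started at y of the field value at the point where the walk first hits the sphere S_{T_d}(o,R), which is a centred Gaussian random variable under P^{T_d}) has variance at most (d²/((d−1)(d−2)))·(1/(d−1))^{R − 2·d_{T_d}(y,o)}. -/
open MeasureTheory ProbabilityTheory Filter Set
open scoped ENNReal NNReal ENat Classical

namespace GFF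

variable {V : Type*} {T : Type*}

/-- Number of ordered adjacent pairs inside `U` (twice the number of edges of the induced
subgraph). -/
noncomputable def adjPairs (G : SimpleGraph V) (U : Set V) : ℕ :=
  Set.ncard {p : V × V | p.1 ∈ U ∧ p.2 ∈ U ∧ G.Adj p.1 p.2}

/-- `U` (assumed connected) induces a tree, i.e. has tree excess zero. -/
def TxZero (G : SimpleGraph V) (U : Set V) : Prop :=
  adjPairs G U = 2 * (Set.ncard U - 1)

/-- Closed ball of radius `R` for the graph distance. -/
def gball (G : SimpleGraph V) (x : V) (R : ℕ) : Set V := {y | G.dist x y ≤ R}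

/-- Set of vertices within distance `R` of the set `A`. -/
def sball (G : SimpleGraph V) (A : Set V) (R : ℕ) : Set V := {y | ∃ a ∈ A, G.dist a y ≤ R}

/-- Connected component containing `x` of the level set `{ω ≥ h}`. -/
def levelComp (G : SimpleGraph V) (h : ℝ) (ω : V → ℝ) (x : V) : Set V :=
  {y | ∃ p : G.Walk x y, ∀ v ∈ p.support, h ≤ ω v}

/-- `G` is `d`-regular. -/
def IsReg (G : SimpleGraph V) (d : ℕ) : Prop := ∀ v, Nat.card (G.neighborSet v) = d

/-- `G` is an infinite `d`-regular tree. -/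
def IsRegTree (G : SimpleGraph V) (d : ℕ) : Prop :=
  G.Connected ∧ G.IsAcyclic ∧ IsReg G d

/-- Transition matrix of SRW on a `d`-regular graph. -/
noncomputable def transP [Fintype V] (G : SimpleGraph V) (d : ℕ) : Matrix V V ℝ :=
  Matrix.of fun u v => if G.Adj u v then ((d : ℝ))⁻¹ else 0

/-- All non-zero eigenvalues of `I - P` are at least `β`. -/
def SpectralGapLB [Fintype V] (G : SimpleGraph V) (d : ℕ) (β : ℝ) : Prop :=
  ∀ (f : V → ℝ) (lam : ℝ),
    Matrix.mulVec ((1 : Matrix V V ℝ) - transP G d) f = lam • f → f ≠ 0 → lam = 0 ∨ β ≤ lam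

/-- `P_x[X̄_t = y]` for the continuous-time SRW with i.i.d. mean-one exponential holding
times (Poissonized jump chain). -/
noncomputable def heatK [Fintype V] (G : SimpleGraph V) (d : ℕ) (t : ℝ) (x y : V) : ℝ :=
  ∑' k : ℕ, Real.exp (-t) * t ^ k / (Nat.factorial k) * ((transP G d) ^ k) x y

/-- The zero-average Green function. -/
noncomputable def zGreen [Fintype V] (G : SimpleGraph V) (d Nn : ℕ) (x y : V) : ℝ :=
  ∫ t in Set.Ioi (0 : ℝ), (heatK G d t x y - 1 / (Nn : ℝ))

/-- Green function of SRW on the `d`-regular tree. -/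
noncomputable def treeGreen (G : SimpleGraph V) (d : ℕ) (x y : V) : ℝ :=
  (((d : ℝ) - 1) / ((d : ℝ) - 2)) * (((d : ℝ) - 1)⁻¹) ^ (G.dist x y)

/-- `μ` is the law of the centred Gaussian field with covariance `K`. -/
def IsGaussianField {I : Type*} (μ : Measure (I → ℝ)) (K : I → I → ℝ) : Prop :=
  IsProbabilityMeasure μ ∧
    ∀ c : I →₀ ℝ,
      μ.map (fun ω => ∑ i ∈ c.support, c i * ω i) =
        gaussianReal 0 (Real.toNNReal (∑ i ∈ c.support, ∑ j ∈ c.support, c i * c j * K i j))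

/-- One-step transition probability of SRW. -/
noncomputable def srwStep (G : SimpleGraph V) (d : ℕ) (u v : V) : ℝ≥0∞ :=
  if G.Adj u v then (d : ℝ≥0∞)⁻¹ else 0

/-- `W x` is the law of discrete-time SRW on `G` started at `x`. -/
def IsSRW [MeasurableSpace V] (G : SimpleGraph V) (d : ℕ) (W : V → Measure (ℕ → V)) : Prop :=
  (∀ x, IsProbabilityMeasure (W x)) ∧
    ∀ (x : V) (k : ℕ) (p : ℕ → V),
      W x {ω | ∀ i ≤ k, ω i = p i} =
        (if p 0 = x then 1 else 0) * ∏ i ∈ Finset.range k, srwStep G d (p i) (p (i + 1))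

/-- Entrance time of the set `A` (`⊤` if never entered). -/
noncomputable def hitTime (A : Set V) (ω : ℕ → V) : ℕ∞ :=
  sInf ((Nat.cast : ℕ → ℕ∞) '' {k | ω k ∈ A})

/-- Exit time of the set `U`. -/
noncomputable def exitTime (U : Set V) (ω : ℕ → V) : ℕ∞ := hitTime Uᶜ ω

/-- Position of the walk at the entrance time of `A`. -/
noncomputable def stopAt (A : Set V) (ω : ℕ → V) : V := ω (hitTime A ω).toNat

/-- `π` is a cover tree of `G` at `x`. -/
def IsCoverMap (Gt : SimpleGraph T) (G : SimpleGraph V) (o : T) (x : V) (π : T → V) : Prop :=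
  π o = x ∧ Function.Surjective π ∧ ∀ y : T, π '' (Gt.neighborSet y) = G.neighborSet (π y)

/-- `T_d^+`: the vertices of the tree whose geodesic to `o` avoids the fixed neighbour
`obar` of `o`. -/
def treePlus (Gt : SimpleGraph T) (o obar : T) : Set T :=
  {z | Gt.dist z obar = Gt.dist z o + 1}

/-- `S^+_{T_d}(o,R)`. -/
def spherePlus (Gt : SimpleGraph T) (o obar : T) (R : ℕ) : Set T :=
  {z | z ∈ treePlus Gt o obar ∧ Gt.dist o z = R}

/-- The critical value for level-set percolation on the tree (w.r.t. the law `μT`). -/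
noncomputable def hstar (Gt : SimpleGraph T) (o : T) (μT : Measure (T → ℝ)) : ℝ :=
  sInf {h : ℝ | μT {ω | (levelComp Gt h ω o).Infinite} = 0}

/-- The forward percolation probability `η⁺(h)`. -/
noncomputable def etaPlus (Gt : SimpleGraph T) (o obar : T) (μT : Measure (T → ℝ)) (h : ℝ) :
    ℝ :=
  (μT {ω | (levelComp Gt h ω o ∩ treePlus Gt o obar).Infinite}).toReal

/-- `s_n`. -/
noncomputable def sn (d Nn : ℕ) : ℕ :=
  max 1 ⌊(8 : ℝ) * Real.logb ((d : ℝ) - 1) (Real.logb ((d : ℝ) - 1) (Nn : ℝ))⌋₊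

/-- `c₀ = αβ/(d-1)`. -/
noncomputable def c0 (d : ℕ) (α β : ℝ) : ℝ := α * β / ((d : ℝ) - 1)

/-- `r_n`. -/
noncomputable def rn (d : ℕ) (α β : ℝ) (Nn : ℕ) : ℕ :=
  max 1 ⌊(c0 d α β / 18) * Real.logb ((d : ℝ) - 1) (Nn : ℝ)⌋₊

/-- `R_n`. -/
noncomputable def Rn (d : ℕ) (α β : ℝ) (Nn : ℕ) : ℕ :=
  max 1 ⌊(c0 d α β / 6) * Real.logb ((d : ℝ) - 1) (Nn : ℝ)⌋₊

/-- `F_A(x,s)`: the vertices of `B(A,s) ∖ A` connected to `x` within `B(A,s) ∖ A`. -/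
def Fset (G : SimpleGraph V) (A : Set V) (s : ℕ) (x : V) : Set V :=
  {z | ∃ p : G.Walk x z, ∀ v ∈ p.support, v ∈ sball G A s ∧ v ∉ A}

/-- Good vertex at the boundary of `A`. -/
def GoodVertex (G : SimpleGraph V) (A : Set V) (s : ℕ) (x : V) : Prop :=
  x ∉ A ∧ (∃! y, y ∈ A ∧ G.Adj x y) ∧
    TxZero G (Fset G A s x) ∧
    ∀ y : V, y ∉ A → (∃ a ∈ A, G.Adj y a) → y ≠ x →
      ∀ p : G.Walk y x, (∀ v ∈ p.support, v ∉ A) → ∃ v ∈ p.support, v ∉ sball G A s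

end GFF

namespace GFFP

open GFF

variable {T : Type}

lemma tree_parent {G : SimpleGraph T} (hc : G.Connected) (ha : G.IsAcyclic) (w u : T) :
    ∃ v0, ∀ v, G.Adj u v → v ≠ v0 → G.dist w v = G.dist w u + 1 := by
  have htr : G.IsTree := ⟨hc, ha⟩
  by_cases h : ∃ v0, G.Adj u v0 ∧ G.dist w u = G.dist w v0 + 1
  · obtain ⟨v0, h0, h1⟩ := h
    refine ⟨v0, fun v hv hne => ?_⟩
    rcases htr.dist_eq_dist_add_one_of_adj w hv with h2 | h2
    · exfalso
      apply hne
      obtain ⟨p, hp⟩ := hc.exists_walk_length_eq_dist w v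
      obtain ⟨q, hq⟩ := hc.exists_walk_length_eq_dist w v0
      have hp' : (p.concat hv.symm).IsPath :=
        SimpleGraph.Walk.isPath_of_length_eq_dist _ (by simp [hp, h2])
      have hq' : (q.concat h0.symm).IsPath :=
        SimpleGraph.Walk.isPath_of_length_eq_dist _ (by simp [hq, h1])
      have := ha.path_unique ⟨_, hp'⟩ ⟨_, hq'⟩
      have h3 := congrArg (fun z : G.Path w u => z.1.penultimate) this
      simpa using h3
    · exact h2
  · refine ⟨u, fun v hv _ => ?_⟩
    rcases htr.dist_eq_dist_add_one_of_adj w hv with h2 | h2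
    · exact absurd ⟨v, hv, h2⟩ h
    · exact h2

lemma dist_pred_le {G : SimpleGraph T} (hc : G.Connected) (w u v : T) (h : G.Adj u v) :
    G.dist w u ≤ G.dist w v + 1 ∧ G.dist w v ≤ G.dist w u + 1 := by
  have h1 := hc.dist_triangle (u := w) (v := v) (w := u)
  have h2 := hc.dist_triangle (u := w) (v := u) (w := v)
  rw [SimpleGraph.dist_eq_one_iff_adj.2 h.symm] at h1
  rw [SimpleGraph.dist_eq_one_iff_adj.2 h] at h2
  exact ⟨h1, h2⟩

lemma nbr_finite {G : SimpleGraph T} {d : ℕ} (hd : 3 ≤ d) (hr : IsReg G d) (u : T) :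
    (G.neighborSet u).Finite := by
  apply Set.finite_of_ncard_pos
  have := hr u
  rw [Nat.card_coe_set_eq] at this
  omega

noncomputable def nb (G : SimpleGraph T) (u : T) : Finset T :=
  if h : (G.neighborSet u).Finite then h.toFinset else ∅

lemma mem_nb {G : SimpleGraph T} {d : ℕ} (hd : 3 ≤ d) (hr : IsReg G d) (u v : T) :
    v ∈ nb G u ↔ G.Adj u v := by
  simp [nb, nbr_finite hd hr u]

lemma card_nb {G : SimpleGraph T} {d : ℕ} (hd : 3 ≤ d) (hr : IsReg G d) (u : T) :
    (nb G u).card = d := by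
  have := hr u
  rw [Nat.card_coe_set_eq, Set.ncard_eq_toFinset_card _ (nbr_finite hd hr u)] at this
  simpa [nb, nbr_finite hd hr u] using this

lemma sum_nb_le {G : SimpleGraph T} {d : ℕ} (hd : 3 ≤ d) (ht : IsRegTree G d) (w u : T)
    (F : ℕ → ℝ) (hF : Antitone F) :
    ∑ v ∈ nb G u, F (G.dist w v) ≤ F (G.dist w u - 1) + ((d : ℝ) - 1) * F (G.dist w u + 1) := by
  obtain ⟨hc, ha, hr⟩ := ht
  obtain ⟨v0, h0⟩ := tree_parent hc ha w u
  have hle : F (G.dist w u + 1) ≤ F (G.dist w u - 1) := hF (by omega)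
  have hcard := card_nb hd hr u
  by_cases hv : v0 ∈ nb G u
  · rw [← Finset.add_sum_erase _ _ hv]
    have e : ∑ v ∈ (nb G u).erase v0, F (G.dist w v)
        = ∑ v ∈ (nb G u).erase v0, F (G.dist w u + 1) := by
      refine Finset.sum_congr rfl fun v hv' => ?_
      rw [Finset.mem_erase, mem_nb hd hr] at hv'
      rw [h0 v hv'.2 hv'.1]
    rw [e, Finset.sum_const, Finset.card_erase_of_mem hv, hcard, nsmul_eq_mul,
      Nat.cast_sub (by omega)]
    have : F (G.dist w v0) ≤ F (G.dist w u - 1) := by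
      apply hF
      have := (dist_pred_le hc w u v0 ((mem_nb hd hr _ _).1 hv)).1
      omega
    push_cast
    linarith
  · have e : ∑ v ∈ nb G u, F (G.dist w v) = ∑ v ∈ nb G u, F (G.dist w u + 1) := by
      refine Finset.sum_congr rfl fun v hv' => ?_
      rw [h0 v ((mem_nb hd hr _ _).1 hv') (by rintro rfl; exact hv hv')]
    rw [e, Finset.sum_const, hcard, nsmul_eq_mul]
    linarith

lemma ball_finite {G : SimpleGraph T} {d : ℕ} (hd : 3 ≤ d) (ht : IsRegTree G d) (o : T) (R : ℕ) :
    {u | G.dist o u ≤ R}.Finite := by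
  obtain ⟨hc, ha, hr⟩ := ht
  induction R with
  | zero =>
    refine (Set.finite_singleton o).subset fun u hu => ?_
    have : G.dist o u = 0 := by simpa using hu
    exact (hc.dist_eq_zero_iff.1 this).symm
  | succ n ih =>
    refine (ih.union (ih.biUnion fun u _ => nbr_finite hd hr u)).subset fun v hv => ?_
    by_cases h : G.dist o v ≤ n
    · exact Or.inl h
    · right
      have hv' : G.dist o v = n + 1 := by have : G.dist o v ≤ n + 1 := hv; omega
      obtain ⟨p, hp⟩ := hc.exists_walk_length_eq_dist v o
      rw [SimpleGraph.dist_comm, hv'] at hp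
      cases p with
      | nil => simp at hp
      | cons hadj q =>
        rename_i x
        simp only [SimpleGraph.Walk.length_cons, Nat.add_right_cancel_iff] at hp
        simp only [Set.mem_iUnion]
        refine ⟨x, ?_, hadj.symm⟩
        have := SimpleGraph.dist_le q
        rw [SimpleGraph.dist_comm, hp] at this
        exact this

lemma tree_countable {G : SimpleGraph T} {d : ℕ} (hd : 3 ≤ d) (ht : IsRegTree G d) (o : T) :
    Countable T := by
  rw [← Set.countable_univ_iff]
  have : (Set.univ : Set T) = ⋃ R : ℕ, {u | G.dist o u ≤ R} := by
    ext u; simp only [Set.mem_univ, Set.mem_iUnion, true_iff]; exact ⟨G.dist o u, by simp⟩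
  rw [this]
  exact Set.countable_iUnion fun R => (ball_finite hd ht o R).countable

lemma meas_sing [Countable T] [MeasurableSpace T] {G : SimpleGraph T} {d : ℕ}
    {W : T → Measure (ℕ → T)} (hW : IsSRW G d W) : MeasurableSingletonClass T := by
  constructor
  intro v
  have key : ∀ u, u ≠ v → ∃ A : Set T, MeasurableSet A ∧ v ∈ A ∧ u ∉ A := by
    intro u huv
    have h0 := hW.2 u 0 (fun _ => v)
    have h1 := hW.2 u 0 (fun _ => u)
    simp only [Finset.range_zero, Finset.prod_empty, mul_one, huv.symm, if_false] at h0
    simp only [Finset.range_zero, Finset.prod_empty, mul_one, if_true] at h1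
    obtain ⟨t, hst, htm, ht0⟩ := exists_measurable_superset_of_null h0
    have hns : ¬ {ω : ℕ → T | ∀ i ≤ 0, ω i = u} ⊆ t := by
      intro h
      have := measure_mono (μ := W u) h
      rw [h1, ht0] at this
      simp at this
    obtain ⟨ω, hω, hωt⟩ := Set.not_subset.1 hns
    refine ⟨(fun a => Function.update ω 0 a) ⁻¹' t, (measurable_update ω) htm, ?_, ?_⟩
    · apply hst
      intro i hi
      obtain rfl : i = 0 := by omega
      simp
    · have : Function.update ω 0 u = ω := by
        rw [← hω 0 le_rfl]; simp
      simpa [this] using hωt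
  choose! A hA using key
  have : ({v} : Set T) = ⋂ u ∈ {u | u ≠ v}, A u := by
    ext x
    simp only [Set.mem_singleton_iff, Set.mem_iInter, Set.mem_setOf_eq]
    constructor
    · rintro rfl u hu; exact (hA u hu).2.1
    · intro h
      by_contra hx
      exact (hA x hx).2.2 (h x hx)
  rw [this]
  exact MeasurableSet.biInter (Set.to_countable _) fun u hu => (hA u hu).1

noncomputable def rr [MeasurableSpace T] (μ : Measure (ℕ → T)) (S : Set T) (k : ℕ) (v : T) :
    ℝ≥0∞ := μ {ω | ω k = v ∧ ∀ i < k, ω i ∉ S}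

noncomputable def qq [MeasurableSpace T] (μ : Measure (ℕ → T)) (S : Set T) (k : ℕ) (v : T) :
    ℝ≥0∞ := μ {ω | ω k = v ∧ ∀ i ≤ k, ω i ∉ S}

noncomputable def ss [MeasurableSpace T] (μ : Measure (ℕ → T)) (S : Set T) (k : ℕ) (v : T) :
    ℝ≥0∞ := if v ∈ S then rr μ S k v else 0

lemma rr_eq [MeasurableSpace T] (μ : Measure (ℕ → T)) (S : Set T) (k : ℕ) (v : T) :
    rr μ S k v = ss μ S k v + qq μ S k v := by
  by_cases h : v ∈ S
  · have : {ω : ℕ → T | ω k = v ∧ ∀ i ≤ k, ω i ∉ S} = ∅ := by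
      ext ω
      simp only [Set.mem_setOf_eq, Set.mem_empty_iff_false, iff_false]
      rintro ⟨rfl, h2⟩
      exact h2 k le_rfl h
    simp [ss, h, qq, this]
  · simp only [ss, h, if_false, zero_add, rr, qq]
    congr 1
    ext ω
    simp only [Set.mem_setOf_eq]
    constructor
    · rintro ⟨rfl, h2⟩
      refine ⟨rfl, fun i hi => ?_⟩
      rcases hi.lt_or_eq with h3 | rfl
      · exact h2 i h3
      · exact h
    · rintro ⟨h1, h2⟩
      exact ⟨h1, fun i hi => h2 i hi.le⟩

lemma cyl_step [MeasurableSpace T] {G : SimpleGraph T} {d : ℕ}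
    {W : T → Measure (ℕ → T)} (hW : IsSRW G d W) (y : T) (k : ℕ) (a : Fin (k + 1) → T) (v : T) :
    W y {ω | (fun i : Fin (k + 1) => ω i) = a ∧ ω (k + 1) = v} =
      W y {ω | (fun i : Fin (k + 1) => ω i) = a} * srwStep G d (a (Fin.last k)) v := by
  set p : ℕ → T := fun n => if h : n < k + 1 then a ⟨n, h⟩ else v with hp
  have e1 : {ω : ℕ → T | (fun i : Fin (k + 1) => ω i) = a} = {ω | ∀ i ≤ k, ω i = p i} := by
    ext ω
    simp only [Set.mem_setOf_eq, funext_iff, hp]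
    constructor
    · intro h i hi
      rw [dif_pos (by omega)]
      exact h ⟨i, by omega⟩
    · intro h i
      have := h i (by omega)
      rwa [dif_pos i.2] at this
  have hpl : p (k + 1) = v := by simp [hp]
  have hpk : p k = a (Fin.last k) := by simp [hp, Fin.last]
  have e2 : {ω : ℕ → T | (fun i : Fin (k + 1) => ω i) = a ∧ ω (k + 1) = v}
      = {ω | ∀ i ≤ k + 1, ω i = p i} := by
    have : {ω : ℕ → T | (fun i : Fin (k + 1) => ω i) = a ∧ ω (k + 1) = v}
      = {ω : ℕ → T | (fun i : Fin (k + 1) => ω i) = a} ∩ {ω | ω (k + 1) = v} := rfl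
    rw [this, e1]
    ext ω
    simp only [Set.mem_inter_iff, Set.mem_setOf_eq]
    constructor
    · rintro ⟨h1, h2⟩ i hi
      rcases Nat.le_succ_iff.1 hi with h3 | rfl
      · exact h1 i h3
      · rw [hpl]; exact h2
    · intro h
      exact ⟨fun i hi => h i (by omega), by rw [h _ le_rfl, hpl]⟩
  rw [e1, e2, hW.2, hW.2, Finset.prod_range_succ, hpl, hpk, mul_assoc]

lemma markov [Countable T] [MeasurableSpace T] [MeasurableSingletonClass T]
    {G : SimpleGraph T} {d : ℕ}
    {W : T → Measure (ℕ → T)} (hW : IsSRW G d W) (y : T) (S : Set T) (k : ℕ) (v : T) :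
    rr (W y) S (k + 1) v ≤ ∑' u, qq (W y) S k u * srwStep G d u v := by
  have hsub : {ω : ℕ → T | ω (k + 1) = v ∧ ∀ i < k + 1, ω i ∉ S} ⊆
      ⋃ u, {ω : ℕ → T | (ω k = u ∧ ∀ i ≤ k, ω i ∉ S) ∧ ω (k + 1) = v} := by
    rintro ω ⟨h1, h2⟩
    simp only [Set.mem_iUnion]
    exact ⟨ω k, ⟨rfl, fun i hi => h2 i (by omega)⟩, h1⟩
  refine (measure_mono hsub).trans ((measure_iUnion_le _).trans ?_)
  refine ENNReal.tsum_le_tsum fun u => le_of_eq ?_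
  let ρ : (ℕ → T) → (Fin (k + 1) → T) := fun ω i => ω i
  have hρ : Measurable ρ := measurable_pi_lambda _ fun i => measurable_pi_apply _
  let A : Set (Fin (k + 1) → T) := {a | a (Fin.last k) = u ∧ ∀ i, a i ∉ S}
  have hA : {ω : ℕ → T | ω k = u ∧ ∀ i ≤ k, ω i ∉ S} = ρ ⁻¹' A := by
    ext ω
    simp only [Set.mem_setOf_eq, Set.mem_preimage, ρ, A, Fin.val_last]
    refine and_congr_right fun _ => ⟨fun h i => h i (by omega), fun h i hi => ?_⟩
    exact h ⟨i, by omega⟩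
  have hv : MeasurableSet {ω : ℕ → T | ω (k + 1) = v} :=
    measurableSet_eq_fun (measurable_pi_apply (k + 1)) measurable_const
  have hAm : MeasurableSet A := (Set.to_countable A).measurableSet
  have h1 : W y {ω : ℕ → T | (ω k = u ∧ ∀ i ≤ k, ω i ∉ S) ∧ ω (k + 1) = v}
      = ((W y).restrict {ω | ω (k + 1) = v}) (ρ ⁻¹' A) := by
    rw [Measure.restrict_apply (hρ hAm), ← hA]; rfl
  rw [h1, qq, hA, ← tsum_measure_preimage_singleton (Set.to_countable A)
      (fun a _ => hρ (measurableSet_singleton a)),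
    ← tsum_measure_preimage_singleton (Set.to_countable A)
      (fun a _ => hρ (measurableSet_singleton a)), ← ENNReal.tsum_mul_right]
  refine tsum_congr fun a => ?_
  rw [Measure.restrict_apply (hρ (measurableSet_singleton _))]
  have h2 := cyl_step hW y k a.1 v
  rw [a.2.1] at h2
  exact h2

lemma supp [Countable T] [MeasurableSpace T] [MeasurableSingletonClass T]
    {G : SimpleGraph T} {d : ℕ} (hc : G.Connected)
    {W : T → Measure (ℕ → T)} (hW : IsSRW G d W) (o y : T) (R : ℕ) (hy : G.dist o y ≤ R) (k : ℕ) :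
    ∀ v, R < G.dist o v → rr (W y) {u | G.dist o u = R} k v = 0 := by
  induction k with
  | zero =>
    intro v hv
    have h := hW.2 y 0 (fun _ => v)
    have hne : v ≠ y := by rintro rfl; omega
    simp only [hne, if_false, zero_mul] at h
    rw [rr, ← h]
    congr 1
    ext ω
    simp
  | succ k ih =>
    intro v hv
    refine le_antisymm ((markov hW y _ k v).trans ?_) (zero_le)
    rw [nonpos_iff_eq_zero, ENNReal.tsum_eq_zero]
    intro u
    by_cases hadj : G.Adj u v
    · by_cases hu : R < G.dist o u
      · have := ih u hu
        rw [rr_eq] at this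
        simp [(add_eq_zero.1 this).2]
      · have h1 := (dist_pred_le hc o u v hadj).2
        have h2 : G.dist o u = R := by omega
        have : qq (W y) {u | G.dist o u = R} k u = 0 := by
          rw [qq]
          convert measure_empty (μ := W y)
          ext ω
          simp only [Set.mem_setOf_eq, Set.mem_empty_iff_false, iff_false]
          rintro ⟨rfl, h4⟩
          exact h4 k le_rfl h2
        simp [this]
    · simp [srwStep, hadj]

lemma qq_zero [Countable T] [MeasurableSpace T] [MeasurableSingletonClass T]
    {G : SimpleGraph T} {d : ℕ} (hc : G.Connected)
    {W : T → Measure (ℕ → T)} (hW : IsSRW G d W) (o y : T) (R : ℕ) (hy : G.dist o y ≤ R) (k : ℕ)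
    (u : T) (hu : ¬ G.dist o u < R) : qq (W y) {u | G.dist o u = R} k u = 0 := by
  by_cases h2 : G.dist o u = R
  · rw [qq]
    convert measure_empty (μ := W y)
    ext ω
    simp only [Set.mem_setOf_eq, Set.mem_empty_iff_false, iff_false]
    rintro ⟨rfl, h4⟩
    exact h4 k le_rfl h2
  · have := supp hc hW o y R hy k u (by omega)
    rw [rr_eq] at this
    exact (add_eq_zero.1 this).2

lemma potential [Countable T] [MeasurableSpace T] [MeasurableSingletonClass T]
    {G : SimpleGraph T} {d : ℕ} (hc : G.Connected)
    {W : T → Measure (ℕ → T)} (hW : IsSRW G d W) (o y : T) (R : ℕ) (hy : G.dist o y ≤ R)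
    (f : T → ℝ≥0∞) (c : ℝ≥0∞)
    (hf : ∀ u, G.dist o u < R → ∑' v, srwStep G d u v * f v + c ≤ f u) (k : ℕ) :
    ∑ j ∈ Finset.range k, (∑' v, ss (W y) {u | G.dist o u = R} j v * f v
      + c * ∑' u, qq (W y) {u | G.dist o u = R} j u)
      + ∑' v, rr (W y) {u | G.dist o u = R} k v * f v ≤ f y := by
  set S := {u | G.dist o u = R} with hS
  induction k with
  | zero =>
    simp only [Finset.range_zero, Finset.sum_empty, zero_add]
    have h : ∀ v, rr (W y) S 0 v = if v = y then 1 else 0 := by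
      intro v
      have h := hW.2 y 0 (fun _ => v)
      simp only [Finset.range_zero, Finset.prod_empty, mul_one] at h
      rw [rr, ← h]
      congr 1
      ext ω
      simp
    simp [h]
  | succ k ih =>
    refine le_trans ?_ ih
    rw [Finset.sum_range_succ, add_assoc]
    refine add_le_add le_rfl ?_
    have e : ∑' v, rr (W y) S k v * f v
        = ∑' v, ss (W y) S k v * f v + ∑' v, qq (W y) S k v * f v := by
      rw [← ENNReal.tsum_add]
      refine tsum_congr fun v => ?_
      rw [rr_eq, add_mul]
    rw [e, add_assoc]
    refine add_le_add le_rfl ?_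
    calc c * ∑' u, qq (W y) S k u + ∑' v, rr (W y) S (k + 1) v * f v
        ≤ c * ∑' u, qq (W y) S k u
          + ∑' v, (∑' u, qq (W y) S k u * srwStep G d u v) * f v := by
          gcongr with v
          exact markov hW y S k v
      _ = ∑' u, qq (W y) S k u * (∑' v, srwStep G d u v * f v + c) := by
          simp_rw [mul_add, ENNReal.tsum_add, ENNReal.tsum_mul_right, add_comm,
            ← ENNReal.tsum_mul_right, ← ENNReal.tsum_mul_left]
          rw [ENNReal.tsum_comm]
          congr 1
          · refine tsum_congr fun u => mul_comm _ _
          · simp_rw [mul_assoc]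
      _ ≤ ∑' u, qq (W y) S k u * f u := by
          refine ENNReal.tsum_le_tsum fun u => ?_
          by_cases hu : G.dist o u < R
          · gcongr
            exact hf u hu
          · rw [qq_zero hc hW o y R hy k u hu]; simp

lemma step_sum {G : SimpleGraph T} {d : ℕ} (hd : 3 ≤ d) (hr : IsReg G d) (u : T)
    (f : T → ℝ) (hf : ∀ v ∈ nb G u, 0 ≤ f v) :
    ∑' v, srwStep G d u v * ENNReal.ofReal (f v)
      = ENNReal.ofReal ((∑ v ∈ nb G u, f v) / d) := by
  rw [tsum_eq_sum (s := nb G u)]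
  · rw [div_eq_mul_inv, mul_comm, ENNReal.ofReal_mul (by positivity),
      ENNReal.ofReal_sum_of_nonneg hf, Finset.mul_sum]
    refine Finset.sum_congr rfl fun v hv => ?_
    rw [srwStep, if_pos ((mem_nb hd hr _ _).1 hv), ENNReal.ofReal_inv_of_pos (by positivity)]
    simp
  · intro v hv
    rw [mem_nb hd hr] at hv
    simp [srwStep, hv]

lemma green_super {G : SimpleGraph T} {d : ℕ} (hd : 3 ≤ d) (ht : IsRegTree G d) (w u : T)
    (h : w ≠ u) :
    ∑' v, srwStep G d u v * ENNReal.ofReal (treeGreen G d w v)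
      ≤ ENNReal.ofReal (treeGreen G d w u) := by
  have hd' : (3 : ℝ) ≤ d := by exact_mod_cast hd
  have hC : 0 ≤ ((d : ℝ) - 1) / ((d : ℝ) - 2) := div_nonneg (by linarith) (by linarith)
  have hb : 0 ≤ ((d : ℝ) - 1)⁻¹ := inv_nonneg.2 (by linarith)
  have hb1 : ((d : ℝ) - 1)⁻¹ ≤ 1 := inv_le_one_of_one_le₀ (by linarith)
  rw [step_sum hd ht.2.2]
  · apply ENNReal.ofReal_le_ofReal
    have h1 := sum_nb_le hd ht w u (fun n => (((d : ℝ) - 1) / ((d : ℝ) - 2)) * (((d : ℝ) - 1)⁻¹) ^ n)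
      (fun m n hmn => mul_le_mul_of_nonneg_left (pow_le_pow_of_le_one hb hb1 hmn) hC)
    rw [div_le_iff₀ (by linarith)]
    refine h1.trans (le_of_eq ?_)
    have hpos := ht.1.pos_dist_of_ne h
    obtain ⟨n, hn⟩ := Nat.exists_eq_succ_of_ne_zero hpos.ne'
    simp only [treeGreen, hn, Nat.succ_eq_add_one, Nat.add_sub_cancel]
    have : (d : ℝ) - 1 ≠ 0 := by linarith
    have : (d : ℝ) - 2 ≠ 0 := by linarith
    rw [pow_succ, pow_succ]
    field_simp
    ring
  · intro v _
    exact mul_nonneg hC (pow_nonneg hb _)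

lemma dist_super {G : SimpleGraph T} {d : ℕ} (hd : 3 ≤ d) (ht : IsRegTree G d) (o u : T) (R : ℕ)
    (h : G.dist o u < R) :
    ∑' v, srwStep G d u v * ENNReal.ofReal ((R : ℝ) - G.dist o v)
      + ENNReal.ofReal (((d : ℝ) - 2) / d) ≤ ENNReal.ofReal ((R : ℝ) - G.dist o u) := by
  have hd' : (3 : ℝ) ≤ d := by exact_mod_cast hd
  have hnn : ∀ v ∈ nb G u, (0 : ℝ) ≤ (R : ℝ) - G.dist o v := by
    intro v hv
    have := (dist_pred_le ht.1 o u v ((mem_nb hd ht.2.2 _ _).1 hv)).2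
    have h2 : G.dist o v ≤ R := by omega
    have h3 : (G.dist o v : ℝ) ≤ R := by exact_mod_cast h2
    linarith
  rw [step_sum hd ht.2.2 u _ hnn, ← ENNReal.ofReal_add
    (div_nonneg (Finset.sum_nonneg hnn) (by linarith)) (div_nonneg (by linarith) (by linarith))]
  apply ENNReal.ofReal_le_ofReal
  have h1 := sum_nb_le hd ht o u (fun n => (R : ℝ) - n)
      (fun m n hmn => by
        have : (m : ℝ) ≤ n := by exact_mod_cast hmn
        simp only; linarith)
  have h2 : (G.dist o u : ℝ) - 1 ≤ ((G.dist o u - 1 : ℕ) : ℝ) := by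
    have : G.dist o u ≤ (G.dist o u - 1) + 1 := by omega
    have h3 : (G.dist o u : ℝ) ≤ ((G.dist o u - 1 : ℕ) : ℝ) + 1 := by exact_mod_cast this
    linarith
  rw [← add_div, div_le_iff₀ (by linarith)]
  push_cast at h1
  nlinarith

/-- the walk hits `v` at first entrance of `S` -/
def DD (S : Set T) (v : T) : Set (ℕ → T) := ⋃ k : ℕ, {ω | ω k = v ∧ ∀ i < k, ω i ∉ S}

lemma DD_meas [Countable T] [MeasurableSpace T] [MeasurableSingletonClass T] (S : Set T) (v : T) :
    MeasurableSet (DD S v) := by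
  refine MeasurableSet.iUnion fun k => ?_
  have e : {ω : ℕ → T | ω k = v ∧ ∀ i < k, ω i ∉ S}
      = {ω | ω k = v} ∩ ⋂ i ∈ {i | i < k}, {ω : ℕ → T | ω i ∈ Sᶜ} := by
    ext ω; simp
  rw [e]
  refine (measurableSet_eq_fun (measurable_pi_apply k) measurable_const).inter ?_
  exact MeasurableSet.biInter (Set.to_countable _)
    fun i _ => measurable_pi_apply i (Set.to_countable Sᶜ).measurableSet

lemma hit_sum [Countable T] [MeasurableSpace T] [MeasurableSingletonClass T]
    {G : SimpleGraph T} {d : ℕ} (hc : G.Connected)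
    {W : T → Measure (ℕ → T)} (hW : IsSRW G d W) (o y : T) (R : ℕ) (hy : G.dist o y ≤ R)
    (f : T → ℝ≥0∞)
    (hf : ∀ u, G.dist o u < R → ∑' v, srwStep G d u v * f v ≤ f u) (Sf : Finset T)
    (hSf : ∀ v ∈ Sf, G.dist o v = R) :
    ∑ v ∈ Sf, W y (DD {u | G.dist o u = R} v) * f v ≤ f y := by
  set S := {u | G.dist o u = R} with hS
  have h1 : ∀ k, ∑ j ∈ Finset.range k, ∑' v, ss (W y) S j v * f v ≤ f y := by
    intro k
    have := potential hc hW o y R hy f 0 (by simpa using hf) k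
    simp only [zero_mul, add_zero] at this
    exact le_self_add.trans this
  have h2 := ENNReal.tsum_le_of_sum_range_le h1
  rw [ENNReal.tsum_comm] at h2
  refine le_trans ?_ ((ENNReal.sum_le_tsum Sf).trans h2)
  refine Finset.sum_le_sum fun v hv => ?_
  rw [ENNReal.tsum_mul_right]
  gcongr
  refine (measure_iUnion_le _).trans (le_of_eq (tsum_congr fun k => ?_))
  rw [ss, if_pos (by exact hSf v hv), rr]

lemma hit_ae [Countable T] [MeasurableSpace T] [MeasurableSingletonClass T]
    {G : SimpleGraph T} {d : ℕ} (hd : 3 ≤ d) (ht : IsRegTree G d)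
    {W : T → Measure (ℕ → T)} (hW : IsSRW G d W) (o y : T) (R : ℕ) (hy : G.dist o y ≤ R) :
    W y {ω | ∀ i, ω i ∉ {u | G.dist o u = R}} = 0 := by
  have hd' : (3 : ℝ) ≤ d := by exact_mod_cast hd
  set S := {u | G.dist o u = R} with hS
  set c := ENNReal.ofReal (((d : ℝ) - 2) / d) with hcdef
  have hc0 : c ≠ 0 := by
    rw [hcdef, Ne, ENNReal.ofReal_eq_zero, not_le]
    exact div_pos (by linarith) (by linarith)
  have h1 : ∀ k, ∑ j ∈ Finset.range k, c * W y {ω | ∀ i, ω i ∉ S}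
      ≤ ENNReal.ofReal ((R : ℝ) - G.dist o y) := by
    intro k
    have := potential ht.1 hW o y R hy _ c (fun u hu => dist_super hd ht o u R hu) k
    refine le_trans ?_ (le_self_add.trans this)
    refine Finset.sum_le_sum fun j _ => ?_
    refine le_trans ?_ le_add_self
    gcongr
    refine le_trans (measure_mono ?_) (measure_iUnion_le _)
    intro ω hω
    simp only [Set.mem_iUnion]
    exact ⟨ω j, rfl, fun i _ => hω i⟩
  have h2 := ENNReal.tsum_le_of_sum_range_le h1
  by_contra hne
  rw [ENNReal.tsum_const_eq_top_of_ne_zero (mul_ne_zero hc0 hne)] at h2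
  exact absurd h2 (by simp)

lemma hit_unique {S : Set T} {p : ℕ → T} {k : ℕ} (hk : p k ∈ S) (hlt : ∀ i < k, p i ∉ S) :
    stopAt S p = p k ∧ ∀ v ∈ S, p ∈ DD S v ↔ v = p k := by
  constructor
  · have : hitTime S p = k := by
      rw [hitTime]
      apply le_antisymm
      · exact sInf_le ⟨k, hk, rfl⟩
      · apply le_sInf
        rintro _ ⟨j, hj, rfl⟩
        by_contra hcon
        rw [not_le] at hcon
        exact hlt j (by exact_mod_cast hcon) hj
    rw [stopAt, this]; simp
  · intro v hv
    simp only [DD, Set.mem_iUnion, Set.mem_setOf_eq]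
    constructor
    · rintro ⟨j, rfl, hj⟩
      rcases lt_trichotomy j k with h | rfl | h
      · exact absurd hv (hlt j h)
      · rfl
      · exact absurd hk (hj k h)
    · rintro rfl
      exact ⟨k, rfl, hlt⟩

lemma integral_eq [Countable T] [MeasurableSpace T] [MeasurableSingletonClass T]
    (μ : Measure (ℕ → T)) [IsProbabilityMeasure μ] (S : Set T) (Sf : Finset T)
    (hSf : ∀ v, v ∈ Sf ↔ v ∈ S)
    (h0 : μ {ω | ∀ i, ω i ∉ S} = 0) (φ : T → ℝ) :
    ∫ p, φ (stopAt S p) ∂μ = ∑ v ∈ Sf, (μ (DD S v)).toReal * φ v := by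
  have hae : (fun p => φ (stopAt S p)) =ᵐ[μ]
      fun p => ∑ v ∈ Sf, (DD S v).indicator (fun _ => φ v) p := by
    have : ∀ᵐ p ∂μ, ¬ ∀ i, p i ∉ S := by
      rw [ae_iff]; simpa using h0
    filter_upwards [this] with p hp
    push Not at hp
    have hk := Nat.find_spec hp
    have hlt : ∀ i < Nat.find hp, p i ∉ S := fun i hi => Nat.find_min hp hi
    obtain ⟨h1, h2⟩ := hit_unique hk hlt
    rw [h1, Finset.sum_eq_single (p (Nat.find hp))]
    · rw [Set.indicator_of_mem ((h2 _ hk).2 rfl)]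
    · intro v hv hne
      exact Set.indicator_of_notMem (fun h => hne ((h2 v ((hSf v).1 hv)).1 h)) _
    · intro h; exact absurd ((hSf _).2 hk) h
  rw [integral_congr_ae hae, integral_finset_sum]
  · refine Finset.sum_congr rfl fun v _ => ?_
    rw [integral_indicator_const _ (DD_meas S v)]
    simp [Measure.real]
  · intro v _
    exact (integrable_const _).indicator (DD_meas S v)

lemma var_field {μ : Measure (T → ℝ)} {K : T → T → ℝ} (hμ : IsGaussianField μ K)
    (Sf : Finset T) (h : T → ℝ) :
    variance (fun ω => ∑ v ∈ Sf, h v * ω v) μ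
      = (Real.toNNReal (∑ u ∈ Sf, ∑ v ∈ Sf, h u * h v * K u v) : ℝ) := by
  let c : T →₀ ℝ := Finsupp.onFinset Sf (fun v => if v ∈ Sf then h v else 0)
    (by intro a ha; by_contra hn; simp [hn] at ha)
  have hcs : c.support ⊆ Sf := Finsupp.support_onFinset_subset
  have hcv : ∀ v ∈ Sf, c v = h v := by intro v hv; simp [c, hv]
  have hcz : ∀ v, v ∉ c.support → c v = 0 := by intro v hv; simpa using hv
  have e1 : (fun ω : T → ℝ => ∑ v ∈ Sf, h v * ω v) = fun ω => ∑ i ∈ c.support, c i * ω i := by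
    funext ω
    rw [Finset.sum_subset hcs (fun v _ hv => by simp [hcz v hv])]
    exact Finset.sum_congr rfl fun v hv => by rw [hcv v hv]
  have e2 : ∑ u ∈ Sf, ∑ v ∈ Sf, h u * h v * K u v
      = ∑ i ∈ c.support, ∑ j ∈ c.support, c i * c j * K i j := by
    rw [Finset.sum_subset hcs (fun v _ hv => by simp [hcz v hv])]
    refine Finset.sum_congr rfl fun u hu => ?_
    rw [Finset.sum_subset hcs (fun v _ hv => by simp [hcz v hv])]
    exact Finset.sum_congr rfl fun v hv => by rw [hcv v hv, hcv u hu]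
  rw [e1, e2]
  have hm : Measurable (fun ω : T → ℝ => ∑ i ∈ c.support, c i * ω i) :=
    Finset.measurable_sum _ fun i _ => (measurable_pi_apply i).const_mul _
  have := variance_map (μ := μ) (X := id) (Y := fun ω : T → ℝ => ∑ i ∈ c.support, c i * ω i)
    aemeasurable_id hm.aemeasurable
  rw [hμ.2 c, variance_id_gaussianReal] at this
  rw [this]; rfl

end GFFP

/-- variance bound for the harmonic average of the tree GFF on a sphere. -/
theorem tree_sphere_harmonic_variance_bound
    (d : ℕ) (hd : 3 ≤ d)
    (T : Type) [MeasurableSpace T]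
    (Gt : SimpleGraph T) (o : T) (htree : GFF.IsRegTree Gt d)
    (W : T → Measure (ℕ → T)) (hW : GFF.IsSRW Gt d W)
    (μT : Measure (T → ℝ)) (hμT : GFF.IsGaussianField μT (GFF.treeGreen Gt d))
    (R : ℕ) (hR : 1 ≤ R) (y : T) (hy : y ∈ GFF.gball Gt o R) :
    variance (fun ω => ∫ p, ω (GFF.stopAt {u : T | Gt.dist o u = R} p) ∂ W y) μT ≤
      ((d : ℝ) ^ 2 / (((d : ℝ) - 1) * ((d : ℝ) - 2))) *
        (((d : ℝ) - 1)⁻¹) ^ ((R : ℤ) - 2 * (Gt.dist y o : ℤ)) := by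
  have hd' : (3 : ℝ) ≤ d := by exact_mod_cast hd
  have hyR : Gt.dist o y ≤ R := hy
  haveI : Countable T := GFFP.tree_countable hd htree o
  haveI : MeasurableSingletonClass T := GFFP.meas_sing hW
  haveI := hW.1 y
  have hfin : {u : T | Gt.dist o u = R}.Finite :=
    (GFFP.ball_finite hd htree o R).subset fun u hu => le_of_eq hu
  set S : Set T := {u : T | Gt.dist o u = R} with hS
  have hSf : ∀ v, v ∈ hfin.toFinset ↔ v ∈ S := fun v => by simp
  set Sf := hfin.toFinset
  set h : T → ℝ := fun v => (W y (GFFP.DD S v)).toReal with hh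
  have hh0 : ∀ v, 0 ≤ h v := fun v => ENNReal.toReal_nonneg
  have e : (fun ω : T → ℝ => ∫ p, ω (GFF.stopAt S p) ∂ W y) = fun ω => ∑ v ∈ Sf, h v * ω v := by
    funext ω
    exact GFFP.integral_eq (W y) S Sf hSf (GFFP.hit_ae hd htree hW o y R hyR) ω
  rw [e, GFFP.var_field hμT]
  have key : ∀ f : T → ℝ, (∀ v, 0 ≤ f v) → (∀ u, Gt.dist o u < R →
      ∑' v, GFF.srwStep Gt d u v * ENNReal.ofReal (f v) ≤ ENNReal.ofReal (f u)) →
      ∑ v ∈ Sf, h v * f v ≤ f y := by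
    intro f hf0 hf
    have h1 := GFFP.hit_sum htree.1 hW o y R hyR _ hf Sf (fun v hv => (hSf v).1 hv)
    have h2 : ∑ v ∈ Sf, W y (GFFP.DD S v) * ENNReal.ofReal (f v)
        = ENNReal.ofReal (∑ v ∈ Sf, h v * f v) := by
      rw [ENNReal.ofReal_sum_of_nonneg (fun v _ => mul_nonneg (hh0 v) (hf0 v))]
      refine Finset.sum_congr rfl fun v _ => ?_
      rw [ENNReal.ofReal_mul (hh0 v), hh, ENNReal.ofReal_toReal (measure_ne_top _ _)]
    rw [h2] at h1
    exact (ENNReal.ofReal_le_ofReal_iff (hf0 y)).1 h1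
  have hC : 0 ≤ ((d : ℝ) - 1) / ((d : ℝ) - 2) := div_nonneg (by linarith) (by linarith)
  have hb : 0 < ((d : ℝ) - 1)⁻¹ := inv_pos.2 (by linarith)
  have hb1 : ((d : ℝ) - 1)⁻¹ ≤ 1 := inv_le_one_of_one_le₀ (by linarith)
  have hg0 : ∀ u v, 0 ≤ GFF.treeGreen Gt d u v := fun u v => mul_nonneg hC (pow_nonneg hb.le _)
  have hmass : ∑ v ∈ Sf, h v ≤ 1 := by
    have := key (fun _ => 1) (fun _ => zero_le_one) (fun u _ => by
      rw [GFFP.step_sum hd htree.2.2 u _ (fun _ _ => zero_le_one)]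
      apply ENNReal.ofReal_le_ofReal
      rw [Finset.sum_const, GFFP.card_nb hd htree.2.2]
      simp only [nsmul_eq_mul, mul_one]
      exact div_self_le_one _)
    simpa using this
  set M : ℝ := ((d : ℝ) - 1) / ((d : ℝ) - 2) * (((d : ℝ) - 1)⁻¹) ^ (R - Gt.dist o y) with hM
  have hM0 : 0 ≤ M := mul_nonneg hC (pow_nonneg hb.le _)
  have hK : ∑ u ∈ Sf, ∑ v ∈ Sf, h u * h v * GFF.treeGreen Gt d u v ≤ M := by
    calc ∑ u ∈ Sf, ∑ v ∈ Sf, h u * h v * GFF.treeGreen Gt d u v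
        ≤ ∑ u ∈ Sf, h u * M := by
          refine Finset.sum_le_sum fun u hu => ?_
          simp_rw [mul_assoc]
          rw [← Finset.mul_sum]
          refine mul_le_mul_of_nonneg_left ?_ (hh0 u)
          have huR : Gt.dist o u = R := (hSf u).1 hu
          refine (key _ (hg0 u) fun z hz => GFFP.green_super hd htree u z ?_).trans ?_
          · rintro rfl; omega
          · refine mul_le_mul_of_nonneg_left (pow_le_pow_of_le_one hb.le hb1 ?_) hC
            have := htree.1.dist_triangle (u := o) (v := y) (w := u)
            rw [SimpleGraph.dist_comm (u := u)]
            omega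
      _ = (∑ u ∈ Sf, h u) * M := by rw [Finset.sum_mul]
      _ ≤ 1 * M := mul_le_mul_of_nonneg_right hmass hM0
      _ = M := one_mul _
  have hMle : M ≤ ((d : ℝ) ^ 2 / (((d : ℝ) - 1) * ((d : ℝ) - 2))) *
        (((d : ℝ) - 1)⁻¹) ^ ((R : ℤ) - 2 * (Gt.dist y o : ℤ)) := by
    rw [hM]
    apply mul_le_mul _ _ (pow_nonneg hb.le _) _
    · rw [div_le_div_iff₀ (by linarith) (mul_pos (by linarith) (by linarith))]
      have : 0 < (d : ℝ) - 2 := by linarith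
      nlinarith [mul_pos this this]
    · rw [← zpow_natCast, SimpleGraph.dist_comm (u := y)]
      apply zpow_le_zpow_right_of_le_one₀ hb hb1
      omega
    · exact div_nonneg (by positivity) (mul_nonneg (by linarith) (by linarith))
  rw [Real.coe_toNNReal']
  exact max_le (hK.trans hMle) (hM0.trans hMle)
end

section
/- For all sufficiently large n, every x ∈ G_n and every 1 ≤ R ≤ (c_0/6)·log_{d−1}(N_n) such that tx(B_{G_n}(x,2R)) = 0, and every y ∈ B_{G_n}(x,R): the random variable E_y^{G_n}[ Ψ_{G_n}(X_{H_{S_{G_n}(x,R)}}) ] (the expectation over the simple random walk started at y of the field value at the point where the walk first hits the sphere S_{G_n}(x,R), a centred Gaussian random variable under P^{G_n}) has variance at most (3d²/((d−1)(d−2)))·(1/(d−1))^{R − 2·d_{G_n}(y,x)}. -/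
open MeasureTheory ProbabilityTheory Filter Set
open scoped ENNReal NNReal ENat Classical

namespace GFFProof
open GFF

/-- Dirichlet sum over ordered pairs. -/
noncomputable def Dir {V : Type*} [Fintype V] (G : SimpleGraph V) (φ : V → ℝ) : ℝ :=
  ∑ u, ∑ v, if G.Adj u v then (φ u - φ v) ^ 2 else 0

lemma reg_sum {V : Type*} [Fintype V] (G : SimpleGraph V) (d : ℕ) (hreg : IsReg G d) (u : V) :
    (∑ v, if G.Adj u v then (1 : ℝ) else 0) = d := by
  have h := hreg u
  rw [Finset.sum_boole, ← h, Nat.card_eq_fintype_card, Fintype.card_subtype]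
  simp [SimpleGraph.mem_neighborSet]

lemma transP_sum {V : Type*} [Fintype V] (G : SimpleGraph V) (d : ℕ) (hd : 3 ≤ d)
    (hreg : IsReg G d) (u : V) : ∑ v, transP G d u v = 1 := by
  have h := reg_sum G d hreg u
  have hd' : (d : ℝ) ≠ 0 := by positivity
  have : ∑ v, transP G d u v = (d : ℝ)⁻¹ * ∑ v, if G.Adj u v then (1 : ℝ) else 0 := by
    rw [Finset.mul_sum]; refine Finset.sum_congr rfl fun v _ => ?_
    simp [transP]
  rw [this, h, inv_mul_cancel₀ hd']

lemma transP_symm {V : Type*} [Fintype V] (G : SimpleGraph V) (d : ℕ) (u v : V) :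
    transP G d u v = transP G d v u := by
  simp [transP, G.adj_comm]

lemma transP_herm {V : Type*} [Fintype V] (G : SimpleGraph V) (d : ℕ) :
    (transP G d).IsHermitian := by
  ext u v
  simp [Matrix.conjTranspose_apply, transP_symm G d v u]

lemma dir_identity {V : Type*} [Fintype V] (G : SimpleGraph V) (d : ℕ) (hd : 3 ≤ d)
    (hreg : IsReg G d) (φ : V → ℝ) :
    2 * d * ∑ u, φ u * (φ u - ∑ v, transP G d u v * φ v) = Dir G φ := by
  have hd' : (d : ℝ) ≠ 0 := by positivity
  have e1 : ∀ u v, (if G.Adj u v then (φ u - φ v) ^ 2 else 0)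
      = d * (transP G d u v * (φ u - φ v) ^ 2) := by
    intro u v
    by_cases h : G.Adj u v <;> simp [transP, h, hd']
  have e2 : Dir G φ = d * ∑ u, ∑ v, transP G d u v * (φ u - φ v) ^ 2 := by
    simp only [Dir, e1, Finset.mul_sum]
  have e3 : ∑ u, ∑ v, transP G d u v * (φ u - φ v) ^ 2
      = ∑ u, ∑ v, transP G d u v * (φ u) ^ 2 + ∑ u, ∑ v, transP G d u v * (φ v) ^ 2
        - 2 * ∑ u, ∑ v, transP G d u v * (φ u * φ v) := by
    simp only [Finset.mul_sum, ← Finset.sum_add_distrib, ← Finset.sum_sub_distrib]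
    refine Finset.sum_congr rfl fun u _ => Finset.sum_congr rfl fun v _ => ?_
    ring
  have e4 : ∑ u, ∑ v, transP G d u v * (φ u) ^ 2 = ∑ u, (φ u) ^ 2 := by
    refine Finset.sum_congr rfl fun u _ => ?_
    rw [← Finset.sum_mul, transP_sum G d hd hreg, one_mul]
  have e5 : ∑ u, ∑ v, transP G d u v * (φ v) ^ 2 = ∑ u, (φ u) ^ 2 := by
    rw [Finset.sum_comm, ← e4]
    refine Finset.sum_congr rfl fun u _ => Finset.sum_congr rfl fun v _ => ?_
    rw [transP_symm]
  have e6 : ∑ u, φ u * (φ u - ∑ v, transP G d u v * φ v)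
      = ∑ u, (φ u) ^ 2 - ∑ u, ∑ v, transP G d u v * (φ u * φ v) := by
    rw [← Finset.sum_sub_distrib]
    refine Finset.sum_congr rfl fun u _ => ?_
    rw [mul_sub, Finset.mul_sum]
    congr 1
    · ring
    · refine Finset.sum_congr rfl fun v _ => ?_
      ring
  rw [e2, e3, e4, e5, e6]; ring

/-- zero Dirichlet energy implies constant -/
lemma const_of_dir {V : Type*} [Fintype V] (G : SimpleGraph V) (hconn : G.Connected)
    (φ : V → ℝ) (h : Dir G φ = 0) (u v : V) : φ u = φ v := by
  have hadj : ∀ a b, G.Adj a b → φ a = φ b := by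
    intro a b hab
    unfold Dir at h
    rw [Finset.sum_eq_zero_iff_of_nonneg (fun i _ => Finset.sum_nonneg fun j _ => by
      split_ifs <;> positivity)] at h
    have h1 := h a (Finset.mem_univ _)
    rw [Finset.sum_eq_zero_iff_of_nonneg (fun j _ => by split_ifs <;> positivity)] at h1
    have h2 := h1 b (Finset.mem_univ _)
    rw [if_pos hab] at h2
    exact sub_eq_zero.1 (pow_eq_zero_iff (two_ne_zero) |>.1 h2)
  obtain ⟨p⟩ := hconn.preconnected u v
  induction p with
  | nil => rfl
  | cons h p ih => rw [hadj _ _ h, ih]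

lemma spectral_data {V : Type*} [Fintype V] (A : Matrix V V ℝ) (hA : A.IsHermitian) :
    ∃ (lam : V → ℝ) (E : V → V → ℝ), (∀ i x, ∑ y, A x y * E i y = lam i * E i x) ∧
      (∀ i j, ∑ x, E i x * E j x = if i = j then 1 else 0) ∧
      (∀ x y, ∑ i, E i x * E i y = if x = y then 1 else 0) := by
  refine ⟨hA.eigenvalues, fun i x => hA.eigenvectorBasis i x, ?_, ?_, ?_⟩
  · intro i x
    have := congrFun (hA.mulVec_eigenvectorBasis i) x
    simpa [Matrix.mulVec, dotProduct] using this
  · intro i j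
    have h := Unitary.coe_star_mul_self hA.eigenvectorUnitary
    have := congrFun (congrFun h i) j
    simpa [Matrix.mul_apply, Matrix.star_apply, Matrix.IsHermitian.eigenvectorUnitary_apply,
      Matrix.one_apply] using this
  · intro x y
    have h := Unitary.coe_mul_star_self hA.eigenvectorUnitary
    have := congrFun (congrFun h x) y
    simpa [Matrix.mul_apply, Matrix.star_apply, Matrix.IsHermitian.eigenvectorUnitary_apply,
      Matrix.one_apply] using this

lemma pow_apply_spec {V : Type*} [Fintype V] (A : Matrix V V ℝ) (lam : V → ℝ) (E : V → V → ℝ)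
    (h1 : ∀ i x, ∑ y, A x y * E i y = lam i * E i x)
    (h3 : ∀ x y, ∑ i, E i x * E i y = if x = y then 1 else 0) (k : ℕ) (x y : V) :
    (A ^ k) x y = ∑ i, lam i ^ k * (E i x * E i y) := by
  induction k generalizing x with
  | zero => simp [h3, Matrix.one_apply]
  | succ k ih =>
    rw [pow_succ', Matrix.mul_apply]
    simp only [ih, Finset.mul_sum]
    rw [Finset.sum_comm]
    refine Finset.sum_congr rfl fun i _ => ?_
    calc ∑ z, A x z * (lam i ^ k * (E i z * E i y))
        = (∑ z, A x z * E i z) * (lam i ^ k * E i y) := by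
          rw [Finset.sum_mul]; refine Finset.sum_congr rfl fun z _ => ?_
          ring
      _ = _ := by rw [h1]; ring

lemma heatK_spec {V : Type*} [Fintype V] (G : SimpleGraph V) (d : ℕ) (lam : V → ℝ)
    (E : V → V → ℝ)
    (h1 : ∀ i x, ∑ y, transP G d x y * E i y = lam i * E i x)
    (h3 : ∀ x y, ∑ i, E i x * E i y = if x = y then 1 else 0) (t : ℝ) (x y : V) :
    heatK G d t x y = ∑ i, Real.exp (-(1 - lam i) * t) * (E i x * E i y) := by
  unfold heatK
  refine HasSum.tsum_eq ?_
  have : ∀ k : ℕ, Real.exp (-t) * t ^ k / (Nat.factorial k) * ((transP G d) ^ k) x y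
      = ∑ i, (Real.exp (-t) * (E i x * E i y)) * ((t * lam i) ^ k / (Nat.factorial k)) := by
    intro k
    rw [pow_apply_spec _ lam E h1 h3, Finset.mul_sum]
    refine Finset.sum_congr rfl fun i _ => ?_
    rw [mul_pow]; ring
  simp only [this]
  refine hasSum_sum fun i _ => ?_
  have h := (NormedSpace.expSeries_div_hasSum_exp (t * lam i)).mul_left
    (Real.exp (-t) * (E i x * E i y))
  rw [← Real.exp_eq_exp_ℝ] at h
  have e0 : -(1 - lam i) * t = -t + t * lam i := by ring
  have e1 : Real.exp (-(1 - lam i) * t) * (E i x * E i y)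
      = Real.exp (-t) * (E i x * E i y) * Real.exp (t * lam i) := by
    rw [e0, Real.exp_add]; ring
  rw [e1]
  exact h

theorem green_main {V : Type*} [Fintype V] (G : SimpleGraph V) (d : ℕ) (hd : 3 ≤ d)
    (hconn : G.Connected) (hreg : IsReg G d) (β : ℝ) (hβ : 0 < β)
    (hgap : SpectralGapLB G d β) (h : V → ℝ) :
    ∃ φ : V → ℝ, ∑ i, ∑ j, h i * h j * zGreen G d (Nat.card V) i j = ∑ i, h i * φ i ∧
      2 * d * ∑ i, h i * φ i = Dir G φ ∧ β * ∑ i, φ i ^ 2 ≤ ∑ i, h i * φ i := by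
  obtain ⟨lam, E, h1, h2, h3⟩ := spectral_data _ (transP_herm G d)
  have hgap' : ∀ i, lam i = 1 ∨ β ≤ 1 - lam i := by
    intro i
    have hh := hgap (E i) (1 - lam i) (by
      ext x
      rw [Matrix.sub_mulVec, Matrix.one_mulVec]
      simp only [Pi.sub_apply, Pi.smul_apply, smul_eq_mul,
        Matrix.mulVec, dotProduct, h1]
      ring) (by
      intro h0
      have := h2 i i
      simp [h0] at this)
    rcases hh with hh | hh
    · left; linarith
    · right; exact hh
  have hN : (0 : ℝ) < Nat.card V := by
    have := hconn.nonempty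
    exact_mod_cast Nat.card_pos
  -- zero mode
  let Pi0 : V → V → ℝ := fun x y => ∑ i, if lam i = 1 then E i x * E i y else 0
  have hEc : ∀ i, lam i = 1 → ∀ x y, E i x = E i y := by
    intro i hi
    refine const_of_dir G hconn _ ?_
    rw [← dir_identity G d hd hreg]
    simp [h1, hi]
  have hE0 : ∀ i, lam i ≠ 1 → ∑ x, E i x = 0 := by
    intro i hi
    have : ∑ x, ∑ y, transP G d x y * E i y = ∑ x, lam i * E i x :=
      Finset.sum_congr rfl fun x _ => h1 i x
    rw [Finset.sum_comm, ← Finset.mul_sum] at this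
    have h4 : ∑ y, ∑ x, transP G d x y * E i y = ∑ y, E i y := by
      refine Finset.sum_congr rfl fun y _ => ?_
      rw [← Finset.sum_mul]
      simp only [transP_symm G d _ y, transP_sum G d hd hreg, one_mul]
    rw [h4] at this
    have : (1 - lam i) * ∑ x, E i x = 0 := by linarith
    rcases mul_eq_zero.1 this with h5 | h5
    · exact absurd (by linarith) hi
    · exact h5
  have hPi : ∀ x y, Pi0 x y = 1 / (Nat.card V : ℝ) := by
    intro x y
    have hc : ∀ z, Pi0 z y = Pi0 x y := by
      intro z
      refine Finset.sum_congr rfl fun i _ => ?_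
      split_ifs with hi
      · rw [hEc i hi z x]
      · rfl
    have hs : ∑ z, Pi0 z y = 1 := by
      have : ∑ z, Pi0 z y = ∑ z, ∑ i, E i z * E i y := by
        simp only [Pi0]
        rw [Finset.sum_comm, Finset.sum_comm (f := fun z i => E i z * E i y)]
        refine Finset.sum_congr rfl fun i _ => ?_
        split_ifs with hi
        · rfl
        · rw [← Finset.sum_mul, hE0 i hi]; simp
      rw [this]; simp [h3]
    simp only [hc, Finset.sum_const, Finset.card_univ, nsmul_eq_mul] at hs
    rw [Nat.card_eq_fintype_card] at hN ⊢
    field_simp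
    linarith
  let c : V → ℝ := fun i => if lam i = 1 then 0 else (1 - lam i)⁻¹
  have hz : ∀ x y, zGreen G d (Nat.card V) x y = ∑ i, c i * (E i x * E i y) := by
    intro x y
    unfold zGreen
    have e : ∀ t : ℝ, heatK G d t x y - 1 / (Nat.card V : ℝ)
        = ∑ i, if lam i = 1 then 0 else Real.exp (-(1 - lam i) * t) * (E i x * E i y) := by
      intro t
      rw [heatK_spec G d lam E h1 h3, ← hPi x y, ← Finset.sum_sub_distrib]
      refine Finset.sum_congr rfl fun i _ => ?_
      split_ifs with hi <;> simp [hi]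
    simp only [e]
    rw [integral_finsetSum]
    · refine Finset.sum_congr rfl fun i _ => ?_
      simp only [c]
      split_ifs with hi
      · simp
      · rw [integral_mul_const, integral_exp_mul_Ioi (by
          have := (hgap' i).resolve_left hi; linarith)]
        simp only [mul_zero, Real.exp_zero]
        congr 1
        rw [neg_div_neg_eq, one_div]
    · intro i _
      split_ifs with hi
      · simp
      · exact (integrableOn_exp_mul_Ioi (by
          have := (hgap' i).resolve_left hi; linarith) 0).mul_const _
  obtain ⟨a, ha⟩ : ∃ a : V → ℝ, ∀ i, a i = ∑ x, h x * E i x := ⟨_, fun i => rfl⟩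
  refine ⟨fun x => ∑ i, c i * a i * E i x, ?_, ?_⟩
  · refine Finset.sum_congr rfl fun x _ => ?_
    simp only [hz, ha, Finset.mul_sum, Finset.sum_mul]
    rw [Finset.sum_comm]
    refine Finset.sum_congr rfl fun i _ => Finset.sum_congr rfl fun y _ => ?_
    ring
  have hhφ : ∑ x, h x * ∑ i, c i * a i * E i x = ∑ i, c i * a i ^ 2 := by
    simp only [Finset.mul_sum]
    rw [Finset.sum_comm]
    refine Finset.sum_congr rfl fun i _ => ?_
    calc ∑ x, h x * (c i * a i * E i x) = c i * a i * a i := by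
          conv_rhs => rw [ha i, Finset.mul_sum, ← ha i]
          refine Finset.sum_congr rfl fun x _ => ?_
          ring
      _ = _ := by ring
  have hquad : ∀ (b e : V → ℝ), ∑ x, (∑ i, b i * E i x) * (∑ j, e j * E j x) = ∑ i, b i * e i := by
    intro b e
    simp only [Finset.sum_mul_sum]
    rw [Finset.sum_comm]
    refine Finset.sum_congr rfl fun i _ => ?_
    rw [Finset.sum_comm]
    calc ∑ j, ∑ x, b i * E i x * (e j * E j x) = ∑ j, b i * e j * ∑ x, E i x * E j x := by
          refine Finset.sum_congr rfl fun j _ => ?_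
          rw [Finset.mul_sum]
          refine Finset.sum_congr rfl fun x _ => ?_
          ring
      _ = _ := by simp [h2]
  constructor
  · rw [← dir_identity G d hd hreg]
    congr 1
    have e1 : ∀ x, (∑ i, c i * a i * E i x) - ∑ y, transP G d x y * ∑ i, c i * a i * E i y
        = ∑ i, (c i * a i * (1 - lam i)) * E i x := by
      intro x
      simp only [Finset.mul_sum]
      rw [Finset.sum_comm, ← Finset.sum_sub_distrib]
      refine Finset.sum_congr rfl fun i _ => ?_
      have : ∑ y, transP G d x y * (c i * a i * E i y) = c i * a i * (lam i * E i x) := by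
        rw [← h1, Finset.mul_sum]
        refine Finset.sum_congr rfl fun y _ => ?_
        ring
      rw [this]; ring
    simp only [e1]
    rw [hhφ, hquad]
    refine Finset.sum_congr rfl fun i _ => ?_
    simp only [c]
    split_ifs with hi
    · simp
    · have : 1 - lam i ≠ 0 := fun h => hi (by linarith)
      field_simp
  · rw [hhφ]
    have e2 : ∑ x, (∑ i, c i * a i * E i x) ^ 2 = ∑ i, (c i * a i) * (c i * a i) := by
      rw [← hquad]
      refine Finset.sum_congr rfl fun x _ => ?_
      ring
    rw [e2, Finset.mul_sum]
    refine Finset.sum_le_sum fun i _ => ?_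
    simp only [c]
    split_ifs with hi
    · simp
    · have hb := (hgap' i).resolve_left hi
      have hp : 0 < 1 - lam i := by linarith
      have : (1 - lam i)⁻¹ * a i ^ 2 - β * ((1 - lam i)⁻¹ * a i * ((1 - lam i)⁻¹ * a i))
        = (1 - lam i)⁻¹ ^ 2 * a i ^ 2 * (1 - lam i - β) := by field_simp
      have h5 : 0 ≤ (1 - lam i)⁻¹ ^ 2 * a i ^ 2 * (1 - lam i - β) :=
        mul_nonneg (by positivity) (by linarith)
      linarith

end GFFProof
namespace GFFProof
open GFF

noncomputable def par {V : Type*} [Fintype V] (G : SimpleGraph V) (x v : V) : ℕ :=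
  ∑ w, if G.Adj v w ∧ G.dist x v = G.dist x w + 1 then 1 else 0
noncomputable def sib {V : Type*} [Fintype V] (G : SimpleGraph V) (x v : V) : ℕ :=
  ∑ w, if G.Adj v w ∧ G.dist x w = G.dist x v then 1 else 0
noncomputable def chi {V : Type*} [Fintype V] (G : SimpleGraph V) (x v : V) : ℕ :=
  ∑ w, if G.Adj v w ∧ G.dist x w = G.dist x v + 1 then 1 else 0

section
variable {V : Type*} [Fintype V] {G : SimpleGraph V} (hconn : G.Connected) (x : V)
include hconn

lemma adj_dist {v w : V} (h : G.Adj v w) : G.dist x w ≤ G.dist x v + 1 := by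
  have h1 := hconn.dist_triangle (u := x) (v := v) (w := w)
  rw [SimpleGraph.dist_eq_one_iff_adj.2 h] at h1
  exact h1

lemma adj_tri {v w : V} (h : G.Adj v w) : G.dist x v = G.dist x w + 1 ∨ G.dist x w = G.dist x v ∨
    G.dist x w = G.dist x v + 1 := by
  have h1 := adj_dist hconn x h
  have h2 := adj_dist hconn x h.symm
  omega

lemma tot {d : ℕ} (hreg : IsReg G d) (v : V) : par G x v + sib G x v + chi G x v = d := by
  have h := reg_sum G d hreg v
  have h' : (∑ w, if G.Adj v w then 1 else 0) = d := by exact_mod_cast h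
  rw [← h', par, sib, chi, ← Finset.sum_add_distrib, ← Finset.sum_add_distrib]
  refine Finset.sum_congr rfl fun w _ => ?_
  by_cases hw : G.Adj v w
  · have := adj_tri hconn x hw
    simp only [hw, true_and, if_true]
    split_ifs <;> omega
  · simp [hw]

lemma par_pos {v : V} (hv : v ≠ x) : 1 ≤ par G x v := by
  have : ∃ w, G.Adj v w ∧ G.dist x v = G.dist x w + 1 := by
    obtain ⟨p, hp⟩ := (hconn.preconnected v x).exists_walk_length_eq_dist
    cases p with
    | nil => exact absurd rfl hv
    | cons h p =>
      rename_i w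
      refine ⟨w, h, ?_⟩
      have h1 := SimpleGraph.dist_le p
      have h2 := adj_dist hconn x h.symm
      rw [SimpleGraph.Walk.length_cons] at hp
      rw [G.dist_comm (u := x) (v := v), G.dist_comm (u := x) (v := w)] at *
      omega
  obtain ⟨w, hw⟩ := this
  unfold par
  calc 1 = if G.Adj v w ∧ G.dist x v = G.dist x w + 1 then 1 else 0 := by rw [if_pos hw]
    _ ≤ _ := Finset.single_le_sum (f := fun w => if G.Adj v w ∧ G.dist x v = G.dist x w + 1
      then 1 else 0) (fun _ _ => Nat.zero_le _) (Finset.mem_univ w)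

omit hconn in
lemma sib_pos_of {v w : V} (h : G.Adj v w ∧ G.dist x w = G.dist x v) : 1 ≤ sib G x v := by
  unfold sib
  calc 1 = if G.Adj v w ∧ G.dist x w = G.dist x v then 1 else 0 := by rw [if_pos h]
    _ ≤ _ := Finset.single_le_sum (f := fun w => if G.Adj v w ∧ G.dist x w = G.dist x v
      then 1 else 0) (fun _ _ => Nat.zero_le _) (Finset.mem_univ w)

omit hconn in
lemma exists_sib {v : V} (h : 1 ≤ sib G x v) :
    ∃ w, w ≠ v ∧ G.dist x w = G.dist x v ∧ 1 ≤ sib G x w := by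
  by_contra hcon
  have : sib G x v = 0 := by
    unfold sib
    refine Finset.sum_eq_zero fun w _ => ?_
    rw [if_neg]
    rintro ⟨h1, h2⟩
    exact hcon ⟨w, h1.ne', h2, sib_pos_of x ⟨h1.symm, h2.symm⟩⟩
  omega

lemma par_self : par G x x = 0 := by
  unfold par
  refine Finset.sum_eq_zero fun w _ => ?_
  rw [if_neg]; rintro ⟨-, h2⟩
  simp at h2

lemma sib_self : sib G x x = 0 := by
  unfold sib
  refine Finset.sum_eq_zero fun w _ => ?_
  rw [if_neg]; rintro ⟨h1, h2⟩
  rw [SimpleGraph.dist_eq_one_iff_adj.2 h1] at h2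
  simp at h2

lemma adjPairs_eq (r : ℕ) : adjPairs G (gball G x r)
    = ∑ v, if G.dist x v ≤ r then 2 * par G x v + sib G x v else 0 := by
  have e0 : adjPairs G (gball G x r)
      = ∑ v, ∑ w, if G.dist x v ≤ r ∧ G.dist x w ≤ r ∧ G.Adj v w then 1 else 0 := by
    unfold adjPairs gball
    rw [Set.ncard_eq_toFinset_card', ← Fintype.sum_prod_type'
      (f := fun v w => if G.dist x v ≤ r ∧ G.dist x w ≤ r ∧ G.Adj v w then 1 else 0)]
    rw [Finset.sum_boole]
    simp
  have e1 : ∀ v w, (if G.dist x v ≤ r ∧ G.dist x w ≤ r ∧ G.Adj v w then 1 else 0)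
      = (if G.dist x v ≤ r then (if G.Adj v w ∧ G.dist x v = G.dist x w + 1 then 1 else 0) else 0)
      + (if G.dist x v ≤ r then (if G.Adj v w ∧ G.dist x w = G.dist x v then 1 else 0) else 0)
      + (if G.dist x w ≤ r then (if G.Adj w v ∧ G.dist x w = G.dist x v + 1 then 1 else 0)
        else 0) := by
    intro v w
    by_cases hw : G.Adj v w
    · have := adj_tri hconn x hw
      simp only [hw, hw.symm, true_and, and_true]
      split_ifs <;> omega
    · have hw' : ¬ G.Adj w v := fun h => hw h.symm
      simp [hw, hw']
  rw [e0]
  simp only [e1, Finset.sum_add_distrib]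
  rw [Finset.sum_comm (f := fun v w => if G.dist x w ≤ r then
    (if G.Adj w v ∧ G.dist x w = G.dist x v + 1 then 1 else 0) else 0)]
  simp only [← Finset.sum_add_distrib]
  refine Finset.sum_congr rfl fun v _ => ?_
  by_cases hv : G.dist x v ≤ r
  · simp only [hv, if_true, Finset.sum_add_distrib, par, sib]; ring
  · simp [hv]

/-- punctured ball -/
lemma adjPairs_eq' (r : ℕ) : adjPairs G (gball G x r)
    = ∑ v ∈ Finset.univ.filter (fun v => G.dist x v ≤ r ∧ v ≠ x), (2 * par G x v + sib G x v) := by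
  rw [adjPairs_eq hconn x r, Finset.sum_filter]
  refine Finset.sum_congr rfl fun v _ => ?_
  by_cases h : v = x
  · subst h; simp [par_self hconn, sib_self hconn]
  · simp [h]

omit hconn in
lemma ncard_ball (r : ℕ) : (gball G x r).ncard
    = (Finset.univ.filter (fun v => G.dist x v ≤ r ∧ v ≠ x)).card + 1 := by
  have h : gball G x r
      = insert x ((Finset.univ.filter (fun v => G.dist x v ≤ r ∧ v ≠ x) : Finset V) : Set V) := by
    ext v
    simp only [gball, Set.mem_ofPred_eq, Finset.coe_filter, Finset.mem_univ, true_and,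
      Set.mem_insert_iff]
    by_cases h : v = x
    · subst h; simp
    · simp [h]
  rw [h, Set.ncard_insert_of_notMem (by simp), Set.ncard_coe_finset]

lemma tree_struct (r : ℕ) (ht : TxZero G (gball G x r)) (v : V) (hv : v ≠ x)
    (hr : G.dist x v ≤ r) : par G x v = 1 ∧ sib G x v = 0 := by
  unfold TxZero at ht
  rw [adjPairs_eq' hconn, ncard_ball, Nat.add_sub_cancel, mul_comm, ← smul_eq_mul,
    ← Finset.sum_const] at ht
  have h2 := (Finset.sum_eq_sum_iff_of_le (fun w hw => by
    have := par_pos hconn x (Finset.mem_filter.1 hw).2.2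
    omega)).1 ht.symm v (by simp [hv, hr])
  have := par_pos hconn x hv
  omega

lemma cycle_struct (r : ℕ) (hc : adjPairs G (gball G x r) ≤ 2 * (gball G x r).ncard) :
    ∃ k0 : ℕ, ∀ v, v ≠ x → G.dist x v ≤ r →
      (G.dist x v ≠ k0 → par G x v = 1 ∧ sib G x v = 0) ∧ par G x v ≤ 2 ∧
        par G x v + sib G x v ≤ 2 := by
  set B := Finset.univ.filter (fun v => G.dist x v ≤ r ∧ v ≠ x) with hB
  rw [adjPairs_eq' hconn, ncard_ball, ← hB] at hc
  let e : V → ℕ := fun v => 2 * (par G x v - 1) + sib G x v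
  have hmem : ∀ v, v ∈ B ↔ G.dist x v ≤ r ∧ v ≠ x := by intro v; simp [hB]
  have hsum : ∑ v ∈ B, e v ≤ 2 := by
    have : ∑ v ∈ B, (2 * par G x v + sib G x v) = ∑ v ∈ B, (e v + 2) := by
      refine Finset.sum_congr rfl fun v hv => ?_
      have := par_pos hconn x ((hmem v).1 hv).2
      simp only [e]; omega
    rw [this, Finset.sum_add_distrib, Finset.sum_const, smul_eq_mul] at hc
    omega
  have h1 : ∀ v ∈ B, e v ≤ 2 := fun v hv =>
    (Finset.single_le_sum (fun _ _ => Nat.zero_le _) hv).trans hsum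
  have h2 : ∀ v ∈ B, ∀ w ∈ B, v ≠ w → e v + e w ≤ 2 := by
    intro v hv w hw hvw
    rw [← Finset.sum_pair hvw]
    refine (Finset.sum_le_sum_of_subset ?_).trans hsum
    intro z hz
    simp only [Finset.mem_insert, Finset.mem_singleton] at hz
    rcases hz with rfl | rfl <;> assumption
  have h3 : ∀ v ∈ B, ∀ w ∈ B, ∀ u ∈ B, v ≠ w → v ≠ u → w ≠ u → e v + e w + e u ≤ 2 := by
    intro v hv w hw u hu hvw hvu hwu
    have : ∑ z ∈ ({v, w, u} : Finset V), e z = e v + e w + e u := by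
      rw [Finset.sum_insert (by simp [hvw, hvu]), Finset.sum_pair hwu, ← add_assoc]
    rw [← this]
    refine (Finset.sum_le_sum_of_subset ?_).trans hsum
    intro z hz
    simp only [Finset.mem_insert, Finset.mem_singleton] at hz
    rcases hz with rfl | rfl | rfl <;> assumption
  have hsibm : ∀ v ∈ B, 1 ≤ sib G x v → ∃ w ∈ B, w ≠ v ∧ G.dist x w = G.dist x v ∧ 1 ≤ e w := by
    intro v hv hs
    obtain ⟨w, hw1, hw2, hw3⟩ := exists_sib x hs
    refine ⟨w, ?_, hw1, hw2, ?_⟩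
    · rw [hmem] at hv ⊢
      refine ⟨by omega, ?_⟩
      rintro rfl
      rw [sib_self hconn] at hw3; omega
    · simp only [e]; omega
  have hpos : ∀ v ∈ B, 1 ≤ par G x v := fun v hv => par_pos hconn x ((hmem v).1 hv).2
  have hA : ∀ v ∈ B, par G x v ≤ 2 ∧ par G x v + sib G x v ≤ 2 := by
    intro v hv
    have a1 := h1 v hv
    have a2 := hpos v hv
    simp only [e] at a1
    refine ⟨by omega, ?_⟩
    by_contra hcon
    have a3 : sib G x v = 2 := by omega
    obtain ⟨w, hw, hwv, -, hew⟩ := hsibm v hv (by omega)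
    have := h2 v hv w hw hwv.symm
    have : e v ≥ 2 := by simp only [e]; omega
    omega
  by_cases hall : ∀ v ∈ B, e v = 0
  · refine ⟨0, fun v hv hr => ⟨fun _ => ?_, hA v ((hmem v).2 ⟨hr, hv⟩)⟩⟩
    have a1 := hall v ((hmem v).2 ⟨hr, hv⟩)
    have a2 := hpos v ((hmem v).2 ⟨hr, hv⟩)
    simp only [e] at a1
    omega
  · push Not at hall
    obtain ⟨v0, hv0, he0⟩ := hall
    refine ⟨G.dist x v0, fun v hv hr => ⟨fun hne => ?_, hA v ((hmem v).2 ⟨hr, hv⟩)⟩⟩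
    have hvB := (hmem v).2 ⟨hr, hv⟩
    have a2 := hpos v hvB
    have hvv0 : v ≠ v0 := fun h => hne (by rw [h])
    have a3 := h2 v hvB v0 hv0 hvv0
    have a4 : sib G x v = 0 := by
      by_contra hs
      obtain ⟨w, hw, hwv, hwd, hew⟩ := hsibm v hvB (by omega)
      have a5 := h3 v hvB w hw v0 hv0 hwv.symm hvv0 (fun h => hne (by rw [← h, hwd]))
      have : 1 ≤ e v := by simp only [e]; omega
      omega
    refine ⟨?_, a4⟩
    have : e v ≥ 2 * (par G x v - 1) := by simp only [e]; omega
    omega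

lemma full_struct {d : ℕ} (hd : 3 ≤ d) (hreg : IsReg G d) (r R2 : ℕ)
    (hc : adjPairs G (gball G x r) ≤ 2 * (gball G x r).ncard)
    (ht : TxZero G (gball G x R2)) :
    ∃ k0 : ℕ, R2 < k0 ∧ ∀ v, v ≠ x → G.dist x v ≤ r →
      (G.dist x v ≠ k0 → par G x v = 1 ∧ chi G x v = d - 1) ∧ par G x v ≤ 2 ∧
        d - 2 ≤ chi G x v := by
  obtain ⟨k0, hk0⟩ := cycle_struct hconn x r hc
  by_cases hk : R2 < k0
  · refine ⟨k0, hk, fun v hv hr => ?_⟩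
    have h1 := hk0 v hv hr
    have h2 := tot hconn x hreg v
    refine ⟨fun h => ?_, h1.2.1, by omega⟩
    have := h1.1 h
    omega
  · refine ⟨R2 + 1, by omega, fun v hv hr => ?_⟩
    have h1 := hk0 v hv hr
    have h2 := tot hconn x hreg v
    refine ⟨fun _ => ?_, h1.2.1, by omega⟩
    by_cases h : G.dist x v = k0
    · have := tree_struct hconn x R2 ht v hv (by omega)
      omega
    · have := h1.1 h
      omega
end
end GFFProof
namespace GFFProof
open GFF

section
variable {V : Type*} [Fintype V] {G : SimpleGraph V} (hconn : G.Connected) (x : V)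
include hconn

lemma sphere_nonempty {d : ℕ} (hd : 3 ≤ d) (hreg : IsReg G d) (r : ℕ)
    (ht : TxZero G (gball G x r)) (k : ℕ) (hk : k ≤ r) : ∃ z, G.dist x z = k := by
  induction k with
  | zero => exact ⟨x, by simp⟩
  | succ k ih =>
    obtain ⟨z, hz⟩ := ih (by omega)
    have hchi : chi G x z ≠ 0 := by
      have h1 := tot hconn x hreg z
      by_cases hzx : z = x
      · subst hzx
        rw [par_self hconn, sib_self hconn] at h1
        omega
      · have := tree_struct hconn x r ht z hzx (by omega)
        omega
    unfold chi at hchi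
    obtain ⟨w, -, hw⟩ := Finset.exists_ne_zero_of_sum_ne_zero hchi
    refine ⟨w, ?_⟩
    by_contra hcon
    apply hw
    rw [if_neg]
    rintro ⟨-, h⟩
    omega

omit hconn in
lemma sum_up (f : V → ℝ) (k : ℕ) :
    (∑ z, if G.dist x z = k then
      ∑ w, (if G.Adj z w ∧ G.dist x w = G.dist x z + 1 then f w else 0) else 0)
    = ∑ w, if G.dist x w = k + 1 then (par G x w : ℝ) * f w else 0 := by
  have e : ∀ z, (if G.dist x z = k then
      ∑ w, (if G.Adj z w ∧ G.dist x w = G.dist x z + 1 then f w else 0) else 0)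
      = ∑ w, if G.dist x z = k then
       (if G.Adj z w ∧ G.dist x w = G.dist x z + 1 then f w else 0) else 0 := by
    intro z; split_ifs <;> simp
  simp only [e]
  rw [Finset.sum_comm]
  refine Finset.sum_congr rfl fun w _ => ?_
  rw [par]
  push_cast
  rw [Finset.sum_mul]
  split_ifs with h
  · refine Finset.sum_congr rfl fun z _ => ?_
    by_cases hz : G.Adj z w
    · have hz' := hz.symm
      simp only [hz, hz', true_and]
      split_ifs <;> first | omega | simp
    · have hz' : ¬ G.Adj w z := fun h => hz h.symm
      simp [hz, hz']
  · refine Finset.sum_eq_zero fun z _ => ?_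
    split_ifs <;> first | omega | rfl

omit hconn in
lemma sum_down (f : V → ℝ) (k : ℕ) :
    (∑ z, if G.dist x z = k + 1 then
      ∑ w, (if G.Adj z w ∧ G.dist x z = G.dist x w + 1 then f w else 0) else 0)
    = ∑ w, if G.dist x w = k then (chi G x w : ℝ) * f w else 0 := by
  have e : ∀ z, (if G.dist x z = k + 1 then
      ∑ w, (if G.Adj z w ∧ G.dist x z = G.dist x w + 1 then f w else 0) else 0)
      = ∑ w, if G.dist x z = k + 1 then
       (if G.Adj z w ∧ G.dist x z = G.dist x w + 1 then f w else 0) else 0 := by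
    intro z; split_ifs <;> simp
  simp only [e]
  rw [Finset.sum_comm]
  refine Finset.sum_congr rfl fun w _ => ?_
  rw [chi]
  push_cast
  rw [Finset.sum_mul]
  split_ifs with h
  · refine Finset.sum_congr rfl fun z _ => ?_
    by_cases hz : G.Adj z w
    · have hz' := hz.symm
      simp only [hz, hz', true_and]
      split_ifs <;> first | omega | simp
    · have hz' : ¬ G.Adj w z := fun h => hz h.symm
      simp [hz, hz']
  · refine Finset.sum_eq_zero fun z _ => ?_
    split_ifs <;> first | omega | rfl

lemma harm_bound {d : ℕ} (hd : 3 ≤ d) (hreg : IsReg G d) (r R : ℕ) (hRr : R ≤ r)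
    (ht : TxZero G (gball G x r)) (f : V → ℝ) (hf0 : ∀ z, 0 ≤ f z)
    (hharm : ∀ z, G.dist x z < R → (d : ℝ) * f z = ∑ w, if G.Adj z w then f w else 0)
    (hR : (∑ z, if G.dist x z = R then f z else 0) ≤ 1) (y : V) (hy : G.dist x y ≤ R) :
    f y ≤ ((d : ℝ) - 1) ^ (G.dist x y) / ((d : ℝ) - 1) ^ R := by
  have hd' : (3 : ℝ) ≤ d := by exact_mod_cast hd
  let F : ℕ → ℝ := fun k => ∑ z, if G.dist x z = k then f z else 0
  let C : ℕ → ℝ := fun k => ∑ z, if G.dist x z = k then (chi G x z : ℝ) * f z else 0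
  have hF0 : ∀ k, 0 ≤ F k := fun k => Finset.sum_nonneg fun z _ => by
    split_ifs
    · exact hf0 z
    · exact le_rfl
  have hne : ∀ z, G.dist x z ≠ 0 → z ≠ x := by rintro z h rfl; simp at h
  have hchi : ∀ z, G.dist x z ≠ 0 → G.dist x z ≤ r → (chi G x z : ℝ) = d - 1 := by
    intro z h1 h2
    have a := tree_struct hconn x r ht z (hne z h1) h2
    have b := tot hconn x hreg z
    have : chi G x z + 1 = d := by omega
    rw [← this]; push_cast; ring
  have hchi0 : (chi G x x : ℝ) = d := by
    have b := tot hconn x hreg x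
    rw [par_self hconn, sib_self hconn] at b
    have : chi G x x = d := by omega
    rw [this]
  have hup : ∀ k, k + 1 ≤ r → (∑ z, if G.dist x z = k then
      ∑ w, (if G.Adj z w ∧ G.dist x w = G.dist x z + 1 then f w else 0) else 0) = F (k + 1) := by
    intro k hk
    rw [sum_up]
    refine Finset.sum_congr rfl fun w _ => ?_
    split_ifs with h
    · rw [(tree_struct hconn x r ht w (hne w (by omega)) (by omega)).1]; simp
    · rfl
  have hsplit : ∀ k, k + 1 < R → (d : ℝ) * F (k + 1) = F (k + 2) + C k := by
    intro k hk
    have hCk : C k = _ := (sum_down x f k).symm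
    rw [hCk, ← hup (k + 1) (by omega), ← Finset.sum_add_distrib, Finset.mul_sum]
    refine Finset.sum_congr rfl fun z _ => ?_
    split_ifs with h
    · rw [hharm z (by omega), ← Finset.sum_add_distrib]
      refine Finset.sum_congr rfl fun w _ => ?_
      by_cases hzw : G.Adj z w
      · have h1 := adj_tri hconn x hzw
        have h2 : G.dist x w ≠ G.dist x z := by
          intro h2
          have h3 := sib_pos_of x ⟨hzw, h2⟩
          have h4 := tree_struct hconn x r ht z (hne z (by omega)) (by omega)
          omega
        simp only [hzw, true_and, if_true]
        split_ifs <;> first | omega | simp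
      · simp [hzw]
    · simp
  have hP : ∀ k, k < R → C k ≤ F (k + 1) := by
    intro k
    induction k with
    | zero =>
      intro hk
      rw [← hup 0 (by omega)]
      refine Finset.sum_le_sum fun z _ => ?_
      split_ifs with h
      · have hz : x = z := (hconn.dist_eq_zero_iff).1 h
        subst hz
        rw [hchi0, hharm x (by omega)]
        refine Finset.sum_le_sum fun w _ => ?_
        by_cases hzw : G.Adj x w
        · simp [hzw, SimpleGraph.dist_eq_one_iff_adj.2 hzw]
        · simp [hzw]
      · exact le_rfl
    | succ k ih =>
      intro hk
      have h1 := ih (by omega)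
      have h2 := hsplit k hk
      have h3 : C (k + 1) = (d - 1) * F (k + 1) := by
        simp only [C, F]
        rw [Finset.mul_sum]
        refine Finset.sum_congr rfl fun z _ => ?_
        split_ifs with h
        · rw [hchi z (by omega) (by omega)]
        · simp
      rw [h3]; linarith
  have hq : ∀ k, k < R → (d - 1 : ℝ) * F k ≤ F (k + 1) := by
    intro k hk
    refine le_trans ?_ (hP k hk)
    simp only [C, F]
    rw [Finset.mul_sum]
    refine Finset.sum_le_sum fun z _ => ?_
    split_ifs with h
    · refine mul_le_mul_of_nonneg_right ?_ (hf0 z)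
      by_cases h0 : G.dist x z = 0
      · have hz : x = z := (hconn.dist_eq_zero_iff).1 h0
        subst hz
        rw [hchi0]; linarith
      · rw [hchi z h0 (by omega)]
    · simp
  have hj : ∀ j k, k + j ≤ R → (d - 1 : ℝ) ^ j * F k ≤ F (k + j) := by
    intro j k
    induction j with
    | zero => intro _; simp
    | succ j ih =>
      intro h
      have h1 := ih (by omega)
      have h2 := hq (k + j) (by omega)
      calc (d - 1 : ℝ) ^ (j + 1) * F k = (d - 1) * ((d - 1 : ℝ) ^ j * F k) := by ring
        _ ≤ (d - 1) * F (k + j) := mul_le_mul_of_nonneg_left h1 (by linarith)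
        _ ≤ _ := h2
  have hyF : f y ≤ F (G.dist x y) := by
    calc f y = if G.dist x y = G.dist x y then f y else 0 := by simp
      _ ≤ _ := Finset.single_le_sum (f := fun z => if G.dist x z = G.dist x y then f z else 0)
        (fun z _ => by
          split_ifs
          · exact hf0 z
          · exact le_rfl) (Finset.mem_univ y)
  have h5 := hj (R - G.dist x y) (G.dist x y) (by omega)
  rw [Nat.add_sub_cancel' hy] at h5
  have hq0 : (0 : ℝ) < d - 1 := by linarith
  have hp : (d - 1 : ℝ) ^ R = (d - 1) ^ (R - G.dist x y) * (d - 1) ^ (G.dist x y) := by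
    rw [← pow_add]; congr 1; omega
  have hpp : (0 : ℝ) < (d - 1) ^ (R - G.dist x y) := by positivity
  have hpp' : (0 : ℝ) < (d - 1) ^ (G.dist x y) := by positivity
  rw [hp, le_div_iff₀ (by positivity)]
  have : (d - 1 : ℝ) ^ (R - G.dist x y) * f y ≤ 1 :=
    (mul_le_mul_of_nonneg_left hyF hpp.le).trans (h5.trans hR)
  nlinarith
end

/-- outward flow operator -/
noncomputable def TT {V : Type*} [Fintype V] (G : SimpleGraph V) (x : V) (m : V → ℝ) (w : V) : ℝ :=
  ∑ p, if G.Adj p w ∧ G.dist x w = G.dist x p + 1 then m p / chi G x p else 0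

/-- level energy -/
noncomputable def DD {V : Type*} [Fintype V] (G : SimpleGraph V) (x : V) (k : ℕ) (φ : V → ℝ) : ℝ :=
  ∑ p, ∑ w, if (G.Adj p w ∧ G.dist x w = G.dist x p + 1) ∧ G.dist x p = k
    then (φ p - φ w) ^ 2 else 0

lemma TT_pair {V : Type*} [Fintype V] (G : SimpleGraph V) (x : V) (m φ : V → ℝ) :
    ∑ w, TT G x m w * φ w = ∑ p, ∑ w, if G.Adj p w ∧ G.dist x w = G.dist x p + 1 then
      m p / chi G x p * φ w else 0 := by
  simp only [TT, Finset.sum_mul]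
  rw [Finset.sum_comm]
  refine Finset.sum_congr rfl fun p _ => Finset.sum_congr rfl fun w _ => ?_
  split_ifs <;> simp

lemma chi_mul {V : Type*} [Fintype V] (G : SimpleGraph V) (x p : V) (a : ℝ) :
    (∑ w, if G.Adj p w ∧ G.dist x w = G.dist x p + 1 then a else 0) = chi G x p * a := by
  rw [chi]; push_cast; rw [Finset.sum_mul]
  refine Finset.sum_congr rfl fun w _ => ?_
  split_ifs <;> simp

lemma flow_step {V : Type*} [Fintype V] (G : SimpleGraph V) (x : V) (k : ℕ) (m : V → ℝ)
    (M c b : ℝ) (hc : 0 < c) (hm0 : ∀ v, 0 ≤ m v) (hsupp : ∀ v, G.dist x v ≠ k → m v = 0)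
    (hsum : ∑ v, m v = 1) (hM : ∀ v, m v ≤ M) (hchi : ∀ v, G.dist x v = k → c ≤ chi G x v)
    (hpar : ∀ v, G.dist x v = k + 1 → (par G x v : ℝ) ≤ b) (hb : 0 ≤ b) :
    (∀ v, 0 ≤ TT G x m v) ∧ (∀ v, G.dist x v ≠ k + 1 → TT G x m v = 0) ∧
    ∑ v, TT G x m v = 1 ∧ (∀ v, TT G x m v ≤ b * (M / c)) ∧
    ∀ (φ : V → ℝ) (t : ℝ), 0 < t →
      ∑ v, m v * φ v ≤ ∑ v, TT G x m v * φ v + t / 2 * (M / c) + 1 / (2 * t) * DD G x k φ := by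
  have hM0 : 0 ≤ M := by
    by_contra hcon
    have : ∑ v, m v = 0 := Finset.sum_eq_zero fun v _ => by
      have := hM v; have := hm0 v; linarith
    linarith
  have hflow : ∀ φ : V → ℝ, ∑ p, m p * φ p
      = ∑ p, ∑ w, if G.Adj p w ∧ G.dist x w = G.dist x p + 1 then
        m p / chi G x p * φ p else 0 := by
    intro φ
    refine Finset.sum_congr rfl fun p _ => ?_
    rw [chi_mul]
    by_cases h : G.dist x p = k
    · have := hchi p h
      have : (chi G x p : ℝ) ≠ 0 := by linarith
      field_simp
    · simp [hsupp p h]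
  refine ⟨?_, ?_, ?_, ?_, ?_⟩
  · intro v
    refine Finset.sum_nonneg fun p _ => ?_
    split_ifs
    · exact div_nonneg (hm0 p) (Nat.cast_nonneg _)
    · exact le_rfl
  · intro v hv
    refine Finset.sum_eq_zero fun p _ => ?_
    split_ifs with h
    · rw [hsupp p (by omega)]; simp
    · rfl
  · have h1 := TT_pair G x m (fun _ => 1)
    have h2 := hflow (fun _ => 1)
    simp only [mul_one] at h1 h2
    rw [h1, ← h2, hsum]
  · intro v
    by_cases hv : G.dist x v = k + 1
    · have h1 : TT G x m v ≤ ∑ p, (if G.Adj v p ∧ G.dist x v = G.dist x p + 1 then 1 else 0)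
          * (M / c) := by
        refine Finset.sum_le_sum fun p _ => ?_
        rw [G.adj_comm p v]
        split_ifs with h
        · rw [one_mul]
          exact div_le_div₀ hM0 (hM p) hc (hchi p (by omega))
        · simp
      refine h1.trans ?_
      rw [← Finset.sum_mul]
      refine mul_le_mul_of_nonneg_right ?_ (by positivity)
      have := hpar v hv
      rw [par] at this
      push_cast at this
      exact this
    · have : TT G x m v = 0 := by
        refine Finset.sum_eq_zero fun p _ => ?_
        split_ifs with h
        · rw [hsupp p (by omega)]; simp
        · rfl
      rw [this]; positivity
  · intro φ t ht
    have hE : ∑ p, ∑ w, (if (G.Adj p w ∧ G.dist x w = G.dist x p + 1)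
        then (m p / chi G x p) ^ 2 else 0) ≤ M / c := by
      calc _ ≤ ∑ p, m p * (M / c) := by
            refine Finset.sum_le_sum fun p _ => ?_
            rw [chi_mul]
            by_cases h : G.dist x p = k
            · have h1 := hchi p h
              have h2 : (0 : ℝ) < chi G x p := by linarith
              have h3 : (chi G x p : ℝ) * (m p / chi G x p) ^ 2 = m p * (m p / chi G x p) := by
                field_simp
              rw [h3]
              exact mul_le_mul_of_nonneg_left (div_le_div₀ hM0 (hM p) hc h1) (hm0 p)
            · simp [hsupp p h]
        _ = M / c := by rw [← Finset.sum_mul, hsum, one_mul]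
    have key : ∑ v, m v * φ v - ∑ v, TT G x m v * φ v ≤
        t / 2 * ∑ p, ∑ w, (if (G.Adj p w ∧ G.dist x w = G.dist x p + 1)
        then (m p / chi G x p) ^ 2 else 0) + 1 / (2 * t) * DD G x k φ := by
      rw [hflow φ, TT_pair, DD]
      simp only [Finset.mul_sum, ← Finset.sum_add_distrib, ← Finset.sum_sub_distrib]
      refine Finset.sum_le_sum fun p _ => Finset.sum_le_sum fun w _ => ?_
      by_cases h : G.Adj p w ∧ G.dist x w = G.dist x p + 1
      · simp only [h, true_and, if_true, and_self]
        by_cases hk : G.dist x p = k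
        · simp only [hk, if_true]
          generalize m p / (chi G x p : ℝ) = a
          generalize φ p = u
          generalize φ w = v
          have : t / 2 * a ^ 2 + 1 / (2 * t) * (u - v) ^ 2 - (a * u - a * v)
              = 1 / (2 * t) * (t * a - (u - v)) ^ 2 := by field_simp; ring
          have : 0 ≤ 1 / (2 * t) * (t * a - (u - v)) ^ 2 := by positivity
          linarith
        · simp [hsupp p hk, hk]
      · simp [h]
    have := mul_le_mul_of_nonneg_left hE (by positivity : 0 ≤ t / 2)
    linarith

lemma DD_sum {V : Type*} [Fintype V] (G : SimpleGraph V) (x : V) (φ : V → ℝ) (R J : ℕ) :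
    ∑ j ∈ Finset.range J, DD G x (R + j) φ ≤ Dir G φ / 2 := by
  have h1 : ∑ j ∈ Finset.range J, DD G x (R + j) φ ≤
      ∑ p, ∑ w, if (G.Adj p w ∧ G.dist x w = G.dist x p + 1) then (φ p - φ w) ^ 2 else 0 := by
    simp only [DD]
    rw [Finset.sum_comm]
    refine Finset.sum_le_sum fun p _ => ?_
    rw [Finset.sum_comm]
    refine Finset.sum_le_sum fun w _ => ?_
    by_cases h : G.Adj p w ∧ G.dist x w = G.dist x p + 1
    · simp only [h, true_and, if_true, and_self]
      rw [← Finset.sum_filter, Finset.sum_const, nsmul_eq_mul]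
      have : (Finset.filter (fun j => G.dist x p = R + j) (Finset.range J)).card ≤ 1 := by
        rw [Finset.card_le_one]
        intro a ha b hb
        have := (Finset.mem_filter.1 ha).2
        have := (Finset.mem_filter.1 hb).2
        omega
      have h2 : ((Finset.filter (fun j => G.dist x p = R + j) (Finset.range J)).card : ℝ) ≤ 1 := by
        exact_mod_cast this
      nlinarith [sq_nonneg (φ p - φ w)]
    · simp [h]
  have h2 : ∑ p, ∑ w, (if (G.Adj p w ∧ G.dist x w = G.dist x p + 1) then (φ p - φ w) ^ 2 else 0)
      + ∑ p, ∑ w, (if (G.Adj p w ∧ G.dist x w = G.dist x p + 1) then (φ p - φ w) ^ 2 else 0)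
      ≤ Dir G φ := by
    have h3 : ∑ p, ∑ w, (if (G.Adj p w ∧ G.dist x w = G.dist x p + 1) then (φ p - φ w) ^ 2 else 0)
        = ∑ p, ∑ w, (if (G.Adj w p ∧ G.dist x p = G.dist x w + 1)
          then (φ w - φ p) ^ 2 else 0) := Finset.sum_comm
    conv_lhs =>
      rhs
      rw [h3]
    rw [Dir, ← Finset.sum_add_distrib]
    refine Finset.sum_le_sum fun p _ => ?_
    rw [← Finset.sum_add_distrib]
    refine Finset.sum_le_sum fun w _ => ?_
    by_cases h : G.Adj p w
    · have h' := h.symm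
      have e : (φ w - φ p) ^ 2 = (φ p - φ w) ^ 2 := by ring
      have e2 := sq_nonneg (φ p - φ w)
      simp only [h, h', true_and, if_true, e]
      split_ifs <;> first | omega | linarith
    · have h' : ¬ G.Adj w p := fun h'' => h h''.symm
      simp [h, h']
  linarith
end GFFProof
namespace GFFProof
open GFF

/-- mass constants -/
noncomputable def Bc (k0 k : ℕ) : ℝ := if k < k0 then 1 else if k = k0 then 2 else 4
/-- energy constants -/
noncomputable def bc (k0 k : ℕ) : ℝ := if k < k0 then 1 else 4

lemma flow_iter {V : Type*} [Fintype V] (G : SimpleGraph V) (x : V) (d : ℕ) (hd : 3 ≤ d)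
    (r R k0 : ℕ) (hR : 1 ≤ R)
    (hstr : ∀ v, v ≠ x → G.dist x v ≤ r →
      (G.dist x v ≠ k0 → par G x v = 1 ∧ chi G x v = d - 1) ∧ par G x v ≤ 2 ∧
        d - 2 ≤ chi G x v)
    (h : V → ℝ) (M : ℝ) (hM0 : 0 ≤ M) (h0 : ∀ v, 0 ≤ h v) (hsupp : ∀ v, G.dist x v ≠ R → h v = 0)
    (hsum : ∑ v, h v = 1) (hM : ∀ v, h v ≤ M) (j : ℕ) :
    R + j ≤ r → ∃ m : V → ℝ, (∀ v, 0 ≤ m v) ∧ (∀ v, G.dist x v ≠ R + j → m v = 0) ∧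
      ∑ v, m v = 1 ∧ (∀ v, m v ≤ Bc k0 (R + j) * (M * (((d : ℝ) - 1) ^ j)⁻¹)) ∧
      ∀ (φ : V → ℝ) (t : ℝ), 0 < t →
      ∑ v, h v * φ v ≤ ∑ v, m v * φ v
        + t / 2 * (M * ∑ i ∈ Finset.range j, bc k0 (R + i) * (((d : ℝ) - 1) ^ (i + 1))⁻¹)
        + 1 / (2 * t) * ∑ i ∈ Finset.range j, DD G x (R + i) φ := by
  have hd' : (3 : ℝ) ≤ d := by exact_mod_cast hd
  induction j with
  | zero =>
    intro _
    refine ⟨h, h0, by simpa using hsupp, hsum, ?_, ?_⟩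
    · intro v
      refine (hM v).trans ?_
      simp only [pow_zero, inv_one, mul_one, Bc]
      split_ifs <;> linarith
    · intro φ t ht
      simp
  | succ j ih =>
    intro hj
    obtain ⟨m, hm0, hms, hm1, hmB, hmE⟩ := ih (by omega)
    set A : ℝ := M * (((d : ℝ) - 1) ^ j)⁻¹ with hA
    have hA0 : 0 ≤ A := by
      have : (0 : ℝ) < d - 1 := by linarith
      positivity
    have hA' : M * (((d : ℝ) - 1) ^ (j + 1))⁻¹ = A / (d - 1) := by
      rw [hA, pow_succ, mul_inv]; ring
    have hne : ∀ z, G.dist x z ≠ 0 → z ≠ x := by rintro z h rfl; simp at h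
    have hcast1 : ((d - 1 : ℕ) : ℝ) = d - 1 := by
      rw [Nat.cast_sub (by omega)]; simp
    have hcast2 : ((d - 2 : ℕ) : ℝ) = d - 2 := by
      rw [Nat.cast_sub (by omega)]; simp
    have hdiv : 2 * A / ((d : ℝ) - 2) ≤ 4 * (A / (d - 1)) := by
      rw [div_le_iff₀ (by linarith)]
      have h1 : 0 ≤ A / ((d : ℝ) - 1) := div_nonneg hA0 (by linarith)
      have h2 : A = A / ((d : ℝ) - 1) * (d - 1) := by
        have : (d : ℝ) - 1 ≠ 0 := by linarith
        field_simp
      nlinarith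
    have hc : (0 : ℝ) < if R + j = k0 then (d : ℝ) - 2 else d - 1 := by split_ifs <;> linarith
    obtain ⟨f0, fs, f1, fB, fE⟩ := flow_step G x (R + j) m (Bc k0 (R + j) * A)
      (if R + j = k0 then (d : ℝ) - 2 else d - 1) (if R + j + 1 = k0 then 2 else 1)
      hc hm0 hms hm1 hmB
      (by
        intro v hv
        have a := hstr v (hne v (by omega)) (by omega)
        split_ifs with hk
        · rw [← hcast2]; exact_mod_cast a.2.2
        · rw [← hcast1, (a.1 (by omega)).2])
      (by
        intro v hv
        have a := hstr v (hne v (by omega)) (by omega)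
        split_ifs with hk
        · exact_mod_cast a.2.1
        · rw [(a.1 (by omega)).1]; simp)
      (by split_ifs <;> norm_num)
    refine ⟨TT G x m, f0, fs, f1, ?_, ?_⟩
    · intro v
      refine (fB v).trans ?_
      rw [hA']
      have hh : 0 ≤ A / ((d : ℝ) - 1) := div_nonneg hA0 (by linarith)
      rcases lt_trichotomy (R + j) k0 with hk | hk | hk
      · by_cases hk1 : R + j + 1 = k0
        · have e1 : ¬ (R + (j + 1) < k0) := by omega
          have e2 : R + (j + 1) = k0 := by omega
          simp only [Bc, hk, hk1, hk.ne, if_true, if_false, e1, e2, one_mul]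
          simp
        · have e1 : (R + (j + 1) < k0) := by omega
          simp only [Bc, hk, hk1, hk.ne, if_true, if_false, e1, one_mul]
          exact le_rfl
      · have e1 : ¬ (R + (j + 1) < k0) := by omega
        have e2 : ¬ R + (j + 1) = k0 := by omega
        have e3 : ¬ R + j + 1 = k0 := by omega
        have e4 : ¬ R + j < k0 := by omega
        rw [if_neg e3, if_pos hk, one_mul, Bc, Bc, if_neg e4, if_pos hk, if_neg e1, if_neg e2]
        exact hdiv
      · have e1 : ¬ (R + (j + 1) < k0) := by omega
        have e2 : ¬ R + (j + 1) = k0 := by omega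
        have e3 : ¬ R + j + 1 = k0 := by omega
        have e4 : ¬ R + j < k0 := by omega
        have e5 : ¬ R + j = k0 := by omega
        simp only [Bc, e1, e2, e3, e4, e5, if_false, one_mul]
        rw [mul_div_assoc]
    · intro φ t ht
      have g1 := hmE φ t ht
      have g2 := fE φ t ht
      rw [Finset.sum_range_succ, Finset.sum_range_succ]
      have g3 : Bc k0 (R + j) * A / (if R + j = k0 then (d : ℝ) - 2 else d - 1)
          ≤ M * (bc k0 (R + j) * (((d : ℝ) - 1) ^ (j + 1))⁻¹) := by
        have : M * (bc k0 (R + j) * (((d : ℝ) - 1) ^ (j + 1))⁻¹)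
          = bc k0 (R + j) * (M * (((d : ℝ) - 1) ^ (j + 1))⁻¹) := by ring
        rw [this, hA']
        rcases lt_trichotomy (R + j) k0 with hk | hk | hk
        · simp only [Bc, bc, hk, hk.ne, if_true, if_false, one_mul]
          exact le_rfl
        · simp only [Bc, bc, hk, lt_irrefl, if_true, if_false]
          exact hdiv
        · have e4 : ¬ R + j < k0 := by omega
          have e5 : ¬ R + j = k0 := by omega
          simp only [Bc, bc, e4, e5, if_false]
          rw [mul_div_assoc]
      have g4 := mul_le_mul_of_nonneg_left g3 (by positivity : 0 ≤ t / 2)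
      rw [mul_add, mul_add, mul_add]
      linarith

lemma bc_sum (k0 R : ℕ) (q : ℝ) (hq : 2 ≤ q) (hk : R + 1 < k0) (J : ℕ) (hJ : 2 ≤ J) :
    ∑ i ∈ Finset.range J, bc k0 (R + i) * (q ^ (i + 1))⁻¹ ≤ (7 / 4 - 4 * (q ^ J)⁻¹) / (q - 1) := by
  have h1 : 0 < q - 1 := by linarith
  have h0 : 0 < q := by linarith
  induction J, hJ using Nat.le_induction with
  | base =>
    have e0 : bc k0 (R + 0) = 1 := by rw [bc, if_pos (by omega)]
    have e1 : bc k0 (R + 1) = 1 := by rw [bc, if_pos (by omega)]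
    rw [Finset.sum_range_succ, Finset.sum_range_one, e0, e1, le_div_iff₀ h1]
    have : (1 * (q ^ (0 + 1))⁻¹ + 1 * (q ^ (1 + 1))⁻¹) * (q - 1) = 1 - (q ^ 2)⁻¹ := by
      field_simp; ring
    rw [this]
    have : (q ^ 2)⁻¹ ≤ (2 ^ 2)⁻¹ := by gcongr
    linarith
  | succ J hJ ih =>
    rw [Finset.sum_range_succ]
    have hb : bc k0 (R + J) ≤ 4 := by rw [bc]; split_ifs <;> norm_num
    have h2 : bc k0 (R + J) * (q ^ (J + 1))⁻¹ ≤ 4 * (q ^ (J + 1))⁻¹ := by gcongr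
    have h3 : (7 / 4 - 4 * (q ^ J)⁻¹) / (q - 1) + 4 * (q ^ (J + 1))⁻¹
        = (7 / 4 - 4 * (q ^ (J + 1))⁻¹) / (q - 1) := by
      field_simp; ring
    linarith

theorem energy_bound {V : Type*} [Fintype V] (G : SimpleGraph V) (x : V) (d : ℕ) (hd : 3 ≤ d)
    (hconn : G.Connected) (hreg : IsReg G d) (β : ℝ) (hβ : 0 < β) (hgap : SpectralGapLB G d β)
    (r R J : ℕ) (hR : 1 ≤ R) (hJ : 2 ≤ J) (hr : R + J ≤ r)
    (hc : adjPairs G (gball G x r) ≤ 2 * (gball G x r).ncard)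
    (ht : TxZero G (gball G x (2 * R)))
    (hJq : 24 / β ≤ ((d : ℝ) - 1) ^ J)
    (h : V → ℝ) (M : ℝ) (hM0 : 0 ≤ M) (h0 : ∀ v, 0 ≤ h v) (hsupp : ∀ v, G.dist x v ≠ R → h v = 0)
    (hsum : ∑ v, h v = 1) (hM : ∀ v, h v ≤ M) :
    ∑ i, ∑ j, h i * h j * zGreen G d (Nat.card V) i j ≤ 3 * (d / ((d : ℝ) - 2)) * M := by
  have hd' : (3 : ℝ) ≤ d := by exact_mod_cast hd
  obtain ⟨φ, e1, e2, e3⟩ := green_main G d hd hconn hreg β hβ hgap h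
  obtain ⟨k0, hk0, hstr⟩ := full_struct hconn x hd hreg r (2 * R) hc ht
  obtain ⟨m, m0, ms, m1, mB, mE⟩ := flow_iter G x d hd r R k0 hR hstr h M hM0 h0 hsupp hsum hM J hr
  have hE := mE φ (4 * d / 3) (by linarith)
  have hb := bc_sum k0 R ((d : ℝ) - 1) (by linarith) (by omega) J hJ
  have hDD := DD_sum G x φ R J
  rw [e1]
  set Q := ∑ i, h i * φ i with hQ
  rw [← e2] at hDD
  have hqJ : 0 < ((d : ℝ) - 1) ^ J := by
    have : (0 : ℝ) < d - 1 := by linarith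
    positivity
  have hinv : (((d : ℝ) - 1) ^ J)⁻¹ ≤ β / 24 := by
    rw [inv_le_comm₀ hqJ (by positivity), inv_div]; exact hJq
  have hb2 : ∑ i ∈ Finset.range J, bc k0 (R + i) * (((d : ℝ) - 1) ^ (i + 1))⁻¹
      ≤ 7 / 4 / (d - 2) := by
    refine hb.trans ?_
    have : (d : ℝ) - 1 - 1 = d - 2 := by ring
    rw [this]
    have : 0 ≤ (((d : ℝ) - 1) ^ J)⁻¹ := by positivity
    gcongr
    · linarith
    · linarith
  have hmB : ∀ v, m v ≤ M * (β / 6) := by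
    intro v
    refine (mB v).trans ?_
    have h4 : Bc k0 (R + J) ≤ 4 := by rw [Bc]; split_ifs <;> norm_num
    have : 0 ≤ M * (((d : ℝ) - 1) ^ J)⁻¹ := by positivity
    calc _ ≤ 4 * (M * (((d : ℝ) - 1) ^ J)⁻¹) := by gcongr
      _ ≤ 4 * (M * (β / 24)) := by gcongr
      _ = _ := by ring
  have hmm : ∑ v, m v * φ v ≤ M / 3 + β / 8 * ∑ v, φ v ^ 2 := by
    have : ∀ v, m v * φ v ≤ m v * (M / 3) + β / 8 * φ v ^ 2 := by
      intro v
      have a : m v * φ v ≤ 2 / β * m v ^ 2 + β / 8 * φ v ^ 2 := by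
        have : 2 / β * m v ^ 2 + β / 8 * φ v ^ 2 - m v * φ v = 2 / β * (m v - β / 4 * φ v) ^ 2 := by
          field_simp; ring
        have : 0 ≤ 2 / β * (m v - β / 4 * φ v) ^ 2 := by positivity
        linarith
      have b : 2 / β * m v ^ 2 ≤ m v * (M / 3) := by
        calc 2 / β * m v ^ 2 = m v * (2 / β * m v) := by ring
          _ ≤ m v * (2 / β * (M * (β / 6))) := by
            have := m0 v
            have := hmB v
            gcongr
          _ = _ := by field_simp; ring
      linarith
    calc ∑ v, m v * φ v ≤ ∑ v, (m v * (M / 3) + β / 8 * φ v ^ 2) :=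
          Finset.sum_le_sum fun v _ => this v
      _ = _ := by rw [Finset.sum_add_distrib, ← Finset.sum_mul, m1, ← Finset.mul_sum, one_mul]
  have hX : 4 * (d : ℝ) / 3 / 2 * (M * ∑ i ∈ Finset.range J,
      bc k0 (R + i) * (((d : ℝ) - 1) ^ (i + 1))⁻¹) ≤ 4 * (d : ℝ) / 3 / 2 * (M * (7 / 4 / (d - 2))) := by
    gcongr
  have hX' : 4 * (d : ℝ) / 3 / 2 * (M * (7 / 4 / (d - 2))) = 7 / 6 * (d / ((d : ℝ) - 2) * M) := by
    have : (d : ℝ) - 2 ≠ 0 := by linarith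
    field_simp; norm_num; ring
  have hY : 1 / (2 * (4 * (d : ℝ) / 3)) * ∑ i ∈ Finset.range J, DD G x (R + i) φ
      ≤ 3 / 8 * Q := by
    calc _ ≤ 1 / (2 * (4 * (d : ℝ) / 3)) * (2 * d * Q / 2) := by gcongr
      _ = _ := by field_simp; ring
  have hdd : M ≤ d / ((d : ℝ) - 2) * M := by
    have : 1 ≤ d / ((d : ℝ) - 2) := by rw [le_div_iff₀ (by linarith)]; linarith
    nlinarith
  linarith
end GFFProof
namespace GFFProof
open GFF

lemma srw_discrete {V : Type*} [Fintype V] [MeasurableSpace V] {G : SimpleGraph V} {d : ℕ}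
    {W : V → Measure (ℕ → V)} (hW : IsSRW G d W) : DiscreteMeasurableSpace V := by
  have key : ∀ u v : V, v ∈ measurableAtom u → v = u := by
    intro u v hv
    by_contra hne
    have h1 := hW.2 u 0 (fun _ => v)
    have h2 := hW.2 u 0 (fun _ => u)
    simp only [Finset.range_zero, Finset.prod_empty, mul_one, if_true, if_neg hne] at h1 h2
    set t := toMeasurable (W u) {ω : ℕ → V | ∀ i ≤ 0, ω i = v} with ht
    have ht0 : W u t = 0 := by rw [ht, measure_toMeasurable, h1]
    have htm : MeasurableSet t := measurableSet_toMeasurable _ _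
    have hsub : {ω : ℕ → V | ∀ i ≤ 0, ω i = u} ⊆ t := by
      intro ω hω
      have hω0 : ω 0 = u := hω 0 le_rfl
      have hm : Measurable (fun a : V => Function.update ω 0 a) := measurable_update ω
      have hs : MeasurableSet ((fun a : V => Function.update ω 0 a) ⁻¹' t) := hm htm
      have hvs : v ∈ ((fun a : V => Function.update ω 0 a) ⁻¹' t) := by
        apply subset_toMeasurable
        intro i hi
        have : i = 0 := by omega
        subst this
        simp
      by_contra hcon
      have hu : u ∈ ((fun a : V => Function.update ω 0 a) ⁻¹' t)ᶜ := by
        intro h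
        apply hcon
        have h' : Function.update ω 0 u ∈ t := h
        rwa [← hω0, Function.update_eq_self] at h'
      have := mem_of_mem_measurableAtom hv hs.compl hu
      exact this hvs
    have := measure_mono (μ := W u) hsub
    rw [h2, ht0] at this
    simp at this
  have : MeasurableSingletonClass V := by
    refine ⟨fun u => ?_⟩
    have : measurableAtom u = {u} := by
      ext v
      refine ⟨fun h => key u v h, ?_⟩
      rintro rfl
      exact mem_measurableAtom_self _
    rw [← this]
    exact MeasurableSet.measurableAtom_of_countable u
  infer_instance

lemma meas_ext {V : Type*} [Fintype V] [MeasurableSpace V] [DiscreteMeasurableSpace V]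
    (μ ν : Measure (ℕ → V)) [IsFiniteMeasure μ]
    (h : ∀ (k : ℕ) (p : ℕ → V), μ {ω | ∀ i ≤ k, ω i = p i} = ν {ω | ∀ i ≤ k, ω i = p i}) :
    μ = ν := by
  have hlim : IsProjectiveLimit μ (fun I : Finset ℕ => μ.map I.restrict) := fun I => rfl
  have h1 : ∀ n : ℕ, μ.map (Finset.restrict (Finset.Iic n)) = ν.map (Finset.restrict (Finset.Iic n)) := by
    intro n
    refine Measure.ext_of_singleton fun a => ?_
    rw [Measure.map_apply (by fun_prop) (MeasurableSet.singleton a),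
      Measure.map_apply (by fun_prop) (MeasurableSet.singleton a)]
    have : (Finset.restrict (π := fun _ => V) (Finset.Iic n)) ⁻¹' {a} = {ω : ℕ → V | ∀ i ≤ n, ω i =
        (fun i => if hi : i ≤ n then a ⟨i, by simpa using hi⟩ else a ⟨0, by simp⟩) i} := by
      ext ω
      simp only [mem_preimage, mem_singleton_iff, mem_ofPred_eq]
      constructor
      · rintro rfl i hi
        simp [hi]
      · intro h
        ext ⟨i, hi⟩
        have hi' : i ≤ n := by simpa using hi
        have := h i hi'
        simpa [hi'] using this
    rw [this]
    exact h n _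
  have hlim2 : IsProjectiveLimit ν (fun I : Finset ℕ => μ.map I.restrict) := by
    intro I
    have hsub := I.subset_Iic_sup_id
    rw [← Finset.restrict₂_comp_restrict hsub, ← Measure.map_map (by fun_prop) (by fun_prop), ← h1,
      Measure.map_map (by fun_prop) (by fun_prop)]
    rfl
  exact hlim.unique hlim2

/-- prepend a vertex -/
def cns {V : Type*} (z : V) (ω : ℕ → V) : ℕ → V := fun n => Nat.casesOn n z ω

@[simp] lemma cns_zero {V : Type*} (z : V) (ω : ℕ → V) : cns z ω 0 = z := rfl
@[simp] lemma cns_succ {V : Type*} (z : V) (ω : ℕ → V) (n : ℕ) : cns z ω (n + 1) = ω n := rfl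

lemma cns_meas {V : Type*} [MeasurableSpace V] (z : V) : Measurable (cns z) := by
  rw [measurable_pi_iff]
  intro n
  cases n with
  | zero => exact measurable_const
  | succ n => exact measurable_pi_apply n

lemma srwStep_sum {V : Type*} [Fintype V] {G : SimpleGraph V} {d : ℕ} (hd : 3 ≤ d)
    (hreg : IsReg G d) (z : V) : ∑ w, srwStep G d z w = 1 := by
  have h := transP_sum G d hd hreg z
  have : ∀ w, srwStep G d z w = ENNReal.ofReal (transP G d z w) := by
    intro w
    simp only [srwStep, transP, Matrix.of_apply]
    split_ifs
    · rw [ENNReal.ofReal_inv_of_pos (by positivity)]; simp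
    · simp
  simp only [this]
  rw [← ENNReal.ofReal_sum_of_nonneg, h, ENNReal.ofReal_one]
  intro w _
  simp only [transP, Matrix.of_apply]
  split_ifs <;> positivity

lemma markov {V : Type*} [Fintype V] [MeasurableSpace V] {G : SimpleGraph V} {d : ℕ} (hd : 3 ≤ d)
    (hreg : IsReg G d) {W : V → Measure (ℕ → V)} (hW : IsSRW G d W) (z : V) :
    W z = ∑ w, srwStep G d z w • (W w).map (cns z) := by
  have := srw_discrete hW
  have := hW.1
  refine meas_ext _ _ fun k p => ?_
  have hms : MeasurableSet {ω : ℕ → V | ∀ i ≤ k, ω i = p i} := by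
    have : {ω : ℕ → V | ∀ i ≤ k, ω i = p i} = ⋂ i ∈ Finset.Iic k, (fun ω : ℕ → V => ω i) ⁻¹' {p i} := by
      ext ω; simp
    rw [this]
    exact Finset.measurableSet_biInter _ fun i _ => measurable_pi_apply i (MeasurableSet.singleton _)
  rw [Measure.finsetSum_apply]
  simp only [Measure.smul_apply, smul_eq_mul, Measure.map_apply (cns_meas z) hms]
  rw [hW.2]
  cases k with
  | zero =>
    have : cns z ⁻¹' {ω | ∀ i ≤ 0, ω i = p i} = if p 0 = z then univ else ∅ := by
      ext ω
      by_cases h : p 0 = z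
      · simp [h]
      · simp [h, Ne.symm h]
    rw [this]
    split_ifs
    · simp [srwStep_sum hd hreg]
    · simp
  | succ k =>
    have : cns z ⁻¹' {ω | ∀ i ≤ k + 1, ω i = p i} =
        if p 0 = z then {ω | ∀ i ≤ k, ω i = (fun j => p (j + 1)) i} else ∅ := by
      ext ω
      by_cases h : p 0 = z
      · simp only [mem_preimage, mem_ofPred_eq, h, if_true]
        constructor
        · intro h i hi
          exact h (i + 1) (by omega)
        · intro h' i hi
          cases i with
          | zero => exact h.symm
          | succ i => exact h' i (by omega)
      · simp only [mem_preimage, mem_ofPred_eq, h, if_false, mem_empty_iff_false, iff_false]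
        intro h'
        exact h (h' 0 (by omega)).symm
    rw [this]
    split_ifs with h
    · simp only [hW.2]
      rw [Finset.sum_eq_single (p 1)]
      · rw [Finset.prod_range_succ']
        simp [h, mul_comm]
      · intro w _ hw
        simp [hw.symm]
      · simp
    · simp

lemma markov_real {V : Type*} [Fintype V] [MeasurableSpace V] {G : SimpleGraph V} {d : ℕ} (hd : 3 ≤ d)
    (hreg : IsReg G d) {W : V → Measure (ℕ → V)} (hW : IsSRW G d W) (z : V) (E : Set (ℕ → V))
    (hE : MeasurableSet E) :
    (d : ℝ) * (W z).real E = ∑ w, if G.Adj z w then (W w).real (cns z ⁻¹' E) else 0 := by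
  have := hW.1
  have h1 : (W z).real E = ∑ w, (srwStep G d z w).toReal * (W w).real (cns z ⁻¹' E) := by
    have : W z E = ∑ w, srwStep G d z w * W w (cns z ⁻¹' E) := by
      conv_lhs => rw [markov hd hreg hW z]
      rw [Measure.finsetSum_apply]
      simp only [Measure.smul_apply, smul_eq_mul, Measure.map_apply (cns_meas z) hE]
    rw [measureReal_def, this, ENNReal.toReal_sum]
    · simp [measureReal_def]
    · intro w _
      refine ENNReal.mul_ne_top ?_ (measure_ne_top _ _)
      rw [srwStep]
      split_ifs
      · simp; omega
      · simp
  rw [h1, Finset.mul_sum]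
  refine Finset.sum_congr rfl fun w _ => ?_
  rw [srwStep]
  have : (d : ℝ) ≠ 0 := by positivity
  split_ifs
  · simp; field_simp
  · simp
end GFFProof
namespace GFFProof
open GFF

lemma ae_zero {α : Type*} [MeasurableSpace α] (μ : Measure α) (A : Set α) :
    (∀ᵐ ω ∂μ, ω ∈ A) ↔ μ Aᶜ = 0 := by
  rw [ae_iff]
  rfl

/-- the walk enters `S` and does so at `u` -/
def EE {V : Type*} (S : Set V) (u : V) : Set (ℕ → V) :=
  {ω | ∃ k, ω k = u ∧ u ∈ S ∧ ∀ i < k, ω i ∉ S}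

/-- the walk enters `S` -/
def HH {V : Type*} (S : Set V) : Set (ℕ → V) := {ω | ∃ k, ω k ∈ S}

lemma stop_eq {V : Type*} (S : Set V) (ω : ℕ → V) (k : ℕ) (h1 : ω k ∈ S) (h2 : ∀ i < k, ω i ∉ S) :
    stopAt S ω = ω k := by
  have : hitTime S ω = k := by
    refine le_antisymm (sInf_le ⟨k, h1, rfl⟩) (le_sInf ?_)
    rintro _ ⟨j, hj, rfl⟩
    have : k ≤ j := by
      by_contra hcon
      exact h2 j (by omega) hj
    exact_mod_cast this
  rw [stopAt, this]
  rfl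

lemma mem_EE_iff {V : Type*} (S : Set V) (ω : ℕ → V) (hω : ω ∈ HH S) (u : V) :
    ω ∈ EE S u ↔ stopAt S ω = u := by
  have hω' : ∃ k, ω k ∈ S := hω
  constructor
  · rintro ⟨k, rfl, h1, h2⟩
    exact stop_eq S ω k h1 h2
  · rintro rfl
    have e := stop_eq S ω (Nat.find hω') (Nat.find_spec hω') (fun i hi => Nat.find_min hω' hi)
    rw [e]
    exact ⟨_, rfl, Nat.find_spec hω', fun i hi => Nat.find_min hω' hi⟩

lemma EE_meas {V : Type*} [MeasurableSpace V] [DiscreteMeasurableSpace V] (S : Set V) (u : V) :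
    MeasurableSet (EE S u) := by
  have : EE S u = ⋃ k, ((fun ω : ℕ → V => ω k) ⁻¹' {v | v = u ∧ u ∈ S} ∩
      ⋂ i ∈ Finset.range k, (fun ω : ℕ → V => ω i) ⁻¹' Sᶜ) := by
    ext ω
    simp [EE, and_assoc]
  rw [this]
  refine MeasurableSet.iUnion fun k => ?_
  refine (measurable_pi_apply k (MeasurableSet.of_discrete)).inter ?_
  exact Finset.measurableSet_biInter _ fun i _ => measurable_pi_apply i (MeasurableSet.of_discrete)

lemma HH_meas {V : Type*} [MeasurableSpace V] [DiscreteMeasurableSpace V] (S : Set V) :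
    MeasurableSet (HH S) := by
  have : HH S = ⋃ k, ((fun ω : ℕ → V => ω k) ⁻¹' S) := by
    ext ω
    simp [HH]
  rw [this]
  exact MeasurableSet.iUnion fun k => measurable_pi_apply k (MeasurableSet.of_discrete)

lemma cns_EE {V : Type*} (S : Set V) (u z : V) (hz : z ∉ S) : cns z ⁻¹' (EE S u) = EE S u := by
  ext ω
  constructor
  · rintro ⟨k, h1, h2, h3⟩
    cases k with
    | zero => rw [cns_zero] at h1; exact absurd (h1 ▸ h2) hz
    | succ k => exact ⟨k, h1, h2, fun i hi => h3 (i + 1) (by omega)⟩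
  · rintro ⟨k, h1, h2, h3⟩
    refine ⟨k + 1, h1, h2, fun i hi => ?_⟩
    cases i with
    | zero => exact hz
    | succ i => exact h3 i (by omega)

lemma cns_HH {V : Type*} (S : Set V) (z : V) (hz : z ∉ S) : cns z ⁻¹' (HH S)ᶜ = (HH S)ᶜ := by
  rw [preimage_compl]
  congr 1
  ext ω
  constructor
  · rintro ⟨k, h1⟩
    cases k with
    | zero => exact absurd h1 hz
    | succ k => exact ⟨k, h1⟩
  · rintro ⟨k, h1⟩
    exact ⟨k + 1, h1⟩

lemma start_ae {V : Type*} [Fintype V] [MeasurableSpace V] {G : SimpleGraph V} {d : ℕ}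
    {W : V → Measure (ℕ → V)} (hW : IsSRW G d W) (z : V) : ∀ᵐ ω ∂ (W z), ω 0 = z := by
  have := srw_discrete hW
  have := hW.1
  have h := hW.2 z 0 (fun _ => z)
  simp only [Finset.range_zero, Finset.prod_empty, mul_one, if_true] at h
  have e : {ω : ℕ → V | ∀ i ≤ 0, ω i = z} = {ω | ω 0 = z} := by
    ext ω; simp
  rw [e] at h
  have hm : MeasurableSet {ω : ℕ → V | ω 0 = z} :=
    (measurable_pi_apply (X := fun _ : ℕ => V) 0) (MeasurableSet.singleton z)
  rw [← prob_compl_eq_zero_iff hm] at h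
  exact (ae_zero _ _).2 h

lemma hit_ae {V : Type*} [Fintype V] [MeasurableSpace V] {G : SimpleGraph V} {d : ℕ} (hd : 3 ≤ d)
    (hconn : G.Connected)
    (hreg : IsReg G d) {W : V → Measure (ℕ → V)} (hW : IsSRW G d W) (S : Set V) (z0 : V)
    (hz0 : z0 ∈ S) (y : V) : ∀ᵐ ω ∂ (W y), ω ∈ HH S := by
  have := srw_discrete hW
  have := hW.1
  have hS : ∀ z ∈ S, (W z).real (HH S)ᶜ = 0 := by
    intro z hz
    have h : ∀ᵐ ω ∂ (W z), ω ∈ HH S := by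
      filter_upwards [start_ae hW z] with ω hω
      exact ⟨0, hω ▸ hz⟩
    rw [measureReal_def, (ae_zero _ _).1 h]; rfl
  have hdir : Dir G (fun z => (W z).real (HH S)ᶜ) = 0 := by
    rw [← dir_identity G d hd hreg]
    rw [Finset.sum_eq_zero, mul_zero]
    intro z _
    by_cases hz : z ∈ S
    · simp [hS z hz]
    · have h1 := markov_real hd hreg hW z (HH S)ᶜ (HH_meas S).compl
      rw [cns_HH S z hz] at h1
      have hd0 : (d : ℝ) ≠ 0 := by positivity
      have h2 : ∑ v, transP G d z v * (W v).real (HH S)ᶜ = (W z).real (HH S)ᶜ := by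
        apply mul_left_cancel₀ hd0
        rw [h1, Finset.mul_sum]
        refine Finset.sum_congr rfl fun v _ => ?_
        simp only [transP, Matrix.of_apply]
        split_ifs
        · field_simp
        · simp
      rw [h2]; simp
  have h3 := const_of_dir G hconn _ hdir y z0
  simp only [hS z0 hz0] at h3
  rw [ae_zero]
  exact (measureReal_eq_zero_iff (measure_ne_top _ _)).1 h3

lemma walk_integral {V : Type*} [Fintype V] [MeasurableSpace V] {G : SimpleGraph V} {d : ℕ} (hd : 3 ≤ d)
    (hconn : G.Connected)
    (hreg : IsReg G d) {W : V → Measure (ℕ → V)} (hW : IsSRW G d W) (S : Set V) (z0 : V)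
    (hz0 : z0 ∈ S) (y : V) (φ : V → ℝ) :
    ∫ p, φ (stopAt S p) ∂ (W y) = ∑ u, (W y).real (EE S u) * φ u := by
  have := srw_discrete hW
  have := hW.1
  have h1 : ∀ᵐ p ∂ (W y), φ (stopAt S p) = ∑ u, (EE S u).indicator (fun _ => φ u) p := by
    filter_upwards [hit_ae hd hconn hreg hW S z0 hz0 y] with p hp
    rw [Finset.sum_eq_single (stopAt S p)]
    · rw [indicator_of_mem ((mem_EE_iff S p hp _).2 rfl)]
    · intro u _ hu
      rw [indicator_of_notMem]
      intro h
      exact hu ((mem_EE_iff S p hp _).1 h).symm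
    · simp
  rw [integral_congr_ae h1, integral_finsetSum]
  · refine Finset.sum_congr rfl fun u _ => ?_
    rw [integral_indicator_const _ (EE_meas S u), smul_eq_mul]
  · intro u _
    exact (integrable_const _).indicator (EE_meas S u)

theorem walk_main {V : Type*} [Fintype V] [MeasurableSpace V] {G : SimpleGraph V} {d : ℕ} (hd : 3 ≤ d)
    (hconn : G.Connected)
    (hreg : IsReg G d) {W : V → Measure (ℕ → V)} (hW : IsSRW G d W) (x : V) (R : ℕ)
    (ht : TxZero G (gball G x (2 * R))) (y : V) (hy : G.dist x y ≤ R) :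
    ∃ h : V → ℝ, (∀ v, 0 ≤ h v) ∧ (∀ v, G.dist x v ≠ R → h v = 0) ∧ ∑ v, h v = 1 ∧
      (∀ v, h v ≤ ((d : ℝ) - 1) ^ (G.dist x y) / ((d : ℝ) - 1) ^ R) ∧
      ∀ φ : V → ℝ, ∫ p, φ (stopAt {u : V | G.dist x u = R} p) ∂ (W y) = ∑ u, h u * φ u := by
  have := srw_discrete hW
  have := hW.1
  obtain ⟨z0, hz0⟩ := sphere_nonempty hconn x hd hreg (2 * R) ht R (by omega)
  set S : Set V := {u : V | G.dist x u = R} with hS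
  have hI := fun φ => walk_integral hd hconn hreg hW S z0 hz0 y φ
  refine ⟨fun u => (W y).real (EE S u), fun v => measureReal_nonneg, ?_, ?_, ?_, hI⟩
  · intro v hv
    have : EE S v = ∅ := by
      ext ω
      simp only [EE, mem_ofPred_eq, mem_empty_iff_false, iff_false]
      rintro ⟨k, -, h, -⟩
      exact hv h
    simp [this]
  · have := hI (fun _ => 1)
    simpa using this.symm
  · intro u
    refine harm_bound hconn x hd hreg (2 * R) R (by omega) ht (fun z => (W z).real (EE S u))
      (fun z => measureReal_nonneg) ?_ ?_ y hy
    · intro z hz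
      have hzS : z ∉ S := by
        intro h
        have : G.dist x z = R := h
        omega
      have h1 := markov_real hd hreg hW z (EE S u) (EE_meas S u)
      rwa [cns_EE S u z hzS] at h1
    · have : ∀ z, (if G.dist x z = R then (W z).real (EE S u) else 0) ≤ if z = u then 1 else 0 := by
        intro z
        split_ifs with h1 h2 h2
        · exact measureReal_le_one
        · have h : ∀ᵐ ω ∂ (W z), ω ∈ (EE S u)ᶜ := by
            filter_upwards [start_ae hW z] with ω hω
            have hzS : ω 0 ∈ S := by rw [hω]; exact h1
            intro hE
            have := (mem_EE_iff S ω ⟨0, hzS⟩ u).1 hE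
            rw [stop_eq S ω 0 hzS (by simp)] at this
            exact h2 (hω.symm.trans this)
          have h' := (ae_zero _ _).1 h
          rw [compl_compl] at h'
          rw [measureReal_def, h']; simp
        · norm_num
        · exact le_rfl
      calc _ ≤ ∑ z, (if z = u then (1 : ℝ) else 0) := Finset.sum_le_sum fun z _ => this z
        _ = 1 := by simp
end GFFProof
namespace GFFProof
open GFF

lemma gauss_var {V : Type*} [Fintype V] (μ : Measure (V → ℝ)) (K : V → V → ℝ)
    (hμ : IsGaussianField μ K) (h : V → ℝ) (B : ℝ) (hB : 0 ≤ B)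
    (hQ : ∑ i, ∑ j, h i * h j * K i j ≤ B) :
    variance (fun ω : V → ℝ => ∑ u, h u * ω u) μ ≤ B := by
  set c : V →₀ ℝ := Finsupp.equivFunOnFinite.symm h with hc
  have hch : ∀ u, c u = h u := fun u => rfl
  have h1 := hμ.2 c
  have h0 : ∀ u, u ∉ c.support → h u = 0 := by
    intro u hu
    rw [← hch]; exact Finsupp.notMem_support_iff.1 hu
  have e1 : (fun ω : V → ℝ => ∑ i ∈ c.support, c i * ω i) = fun ω => ∑ u, h u * ω u := by
    funext ω
    refine Finset.sum_subset (Finset.subset_univ _) fun u _ hu => ?_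
    rw [hch, h0 u hu, zero_mul]
  have e2 : ∑ i ∈ c.support, ∑ j ∈ c.support, c i * c j * K i j
      = ∑ i, ∑ j, h i * h j * K i j := by
    have : ∀ i, ∑ j ∈ c.support, c i * c j * K i j = ∑ j, h i * h j * K i j := by
      intro i
      refine Finset.sum_subset (Finset.subset_univ _) fun u _ hu => ?_
      rw [hch u, h0 u hu, mul_zero, zero_mul]
    simp only [this]
    refine Finset.sum_subset (Finset.subset_univ _) fun u _ hu => ?_
    simp [h0 u hu]
  rw [e1, e2] at h1
  have hm : Measurable (fun ω : V → ℝ => ∑ u, h u * ω u) := by fun_prop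
  rw [← variance_id_map hm.aemeasurable, h1, variance_id_gaussianReal]
  rw [Real.coe_toNNReal']
  exact max_le hQ hB

lemma final_num (d : ℕ) (hd : 3 ≤ d) (R l : ℕ) :
    3 * (d / ((d : ℝ) - 2)) * (((d : ℝ) - 1) ^ l / ((d : ℝ) - 1) ^ R) ≤
    (3 * (d : ℝ) ^ 2 / (((d : ℝ) - 1) * ((d : ℝ) - 2))) *
            (((d : ℝ) - 1)⁻¹) ^ ((R : ℤ) - 2 * (l : ℤ)) := by
  have hd' : (3 : ℝ) ≤ d := by exact_mod_cast hd
  have h1 : (0 : ℝ) < d - 1 := by linarith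
  have h2 : (0 : ℝ) < d - 2 := by linarith
  have e : (((d : ℝ) - 1)⁻¹) ^ ((R : ℤ) - 2 * (l : ℤ)) = (((d : ℝ) - 1) ^ (2 * l)) / ((d : ℝ) - 1) ^ R := by
    rw [inv_zpow, ← zpow_neg, neg_sub, zpow_sub₀ h1.ne']
    norm_cast
  rw [e]
  have a : 3 * (d / ((d : ℝ) - 2)) ≤ 3 * (d : ℝ) ^ 2 / (((d : ℝ) - 1) * ((d : ℝ) - 2)) := by
    rw [← mul_div_assoc, div_le_div_iff₀ h2 (by positivity)]
    nlinarith [mul_pos h2 h2, mul_pos (by linarith : (0 : ℝ) < d) h2]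
  have b : ((d : ℝ) - 1) ^ l ≤ ((d : ℝ) - 1) ^ (2 * l) :=
    pow_le_pow_right₀ (by linarith) (by omega)
  gcongr

lemma exists_n0 (d : ℕ) (hd : 3 ≤ d) (N : ℕ → ℕ) (α β : ℝ)
    (hα : 0 < α ∧ α ≤ 1) (hβ : 0 < β ∧ β ≤ 2) (hN : StrictMono N) (J : ℕ) :
    ∃ n₀ : ℕ, ∀ n ≥ n₀, ∀ R : ℕ, (R : ℝ) ≤ c0 d α β / 6 * Real.logb ((d : ℝ) - 1) (N n : ℝ) →
      R + J ≤ ⌊α * Real.logb ((d : ℝ) - 1) (N n : ℝ)⌋₊ := by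
  have hd' : (3 : ℝ) ≤ d := by exact_mod_cast hd
  have ht : Tendsto (fun n => Real.logb ((d : ℝ) - 1) (N n : ℝ)) atTop atTop :=
    (Real.tendsto_logb_atTop (by linarith)).comp
      (tendsto_natCast_atTop_atTop.comp hN.tendsto_atTop)
  obtain ⟨n₀, h⟩ := eventually_atTop.1 (ht.eventually_ge_atTop (2 * J / α))
  refine ⟨n₀, fun n hn R hR => ?_⟩
  have h1 := h n hn
  set L := Real.logb ((d : ℝ) - 1) (N n : ℝ)
  rw [div_le_iff₀ hα.1] at h1
  have hc : c0 d α β ≤ α := by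
    rw [c0, div_le_iff₀ (by linarith)]
    nlinarith [hα.1]
  have hL : 0 ≤ L := by
    by_contra hcon
    have : (0 : ℝ) ≤ J := Nat.cast_nonneg J
    nlinarith [hα.1]
  have h2 : c0 d α β * L ≤ α * L := mul_le_mul_of_nonneg_right hc hL
  apply Nat.le_floor
  push_cast
  have : (0 : ℝ) ≤ J := Nat.cast_nonneg J
  linarith
end GFFProof

/-- variance bound for the harmonic average of the zero-average GFF on a
sphere around a vertex with tree-like neighbourhood. -/
theorem graph_sphere_harmonic_variance_bound
    (d : ℕ) (hd : 3 ≤ d)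
    (V : ℕ → Type) [∀ n, Fintype (V n)] [∀ n, MeasurableSpace (V n)]
    (G : ∀ n, SimpleGraph (V n)) (N : ℕ → ℕ) (α β : ℝ)
    (hα : 0 < α ∧ α ≤ 1) (hβ : 0 < β ∧ β ≤ 2)
    (hNmono : StrictMono N) (hNpos : ∀ n, 1 ≤ N n)
    (hcard : ∀ n, Nat.card (V n) = N n)
    (hconn : ∀ n, (G n).Connected)
    (hreg : ∀ n, GFF.IsReg (G n) d)
    (hcyc : ∀ n (x : V n),
      GFF.adjPairs (G n) (GFF.gball (G n) x ⌊α * Real.logb ((d : ℝ) - 1) (N n : ℝ)⌋₊) ≤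
        2 * (GFF.gball (G n) x ⌊α * Real.logb ((d : ℝ) - 1) (N n : ℝ)⌋₊).ncard)
    (hgap : ∀ n, GFF.SpectralGapLB (G n) d β)
    (μ : ∀ n, Measure (V n → ℝ))
    (hμ : ∀ n, GFF.IsGaussianField (μ n) (GFF.zGreen (G n) d (N n)))
    (W : ∀ n, V n → Measure (ℕ → V n))
    (hW : ∀ n, GFF.IsSRW (G n) d (W n)) :
    ∃ n₀ : ℕ, ∀ n ≥ n₀, ∀ (x : V n) (R : ℕ), 1 ≤ R →
      (R : ℝ) ≤ GFF.c0 d α β / 6 * Real.logb ((d : ℝ) - 1) (N n : ℝ) →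
      GFF.TxZero (G n) (GFF.gball (G n) x (2 * R)) →
      ∀ y ∈ GFF.gball (G n) x R,
        variance
            (fun ω => ∫ p, ω (GFF.stopAt {u : V n | (G n).dist x u = R} p) ∂ W n y) (μ n) ≤
          (3 * (d : ℝ) ^ 2 / (((d : ℝ) - 1) * ((d : ℝ) - 2))) *
            (((d : ℝ) - 1)⁻¹) ^ ((R : ℤ) - 2 * ((G n).dist y x : ℤ)) := by
  have hd' : (3 : ℝ) ≤ d := by exact_mod_cast hd
  obtain ⟨J0, hJ0⟩ := pow_unbounded_of_one_lt (24 / β) (by linarith : (1 : ℝ) < (d : ℝ) - 1)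
  have hJ : 24 / β ≤ ((d : ℝ) - 1) ^ (J0 + 2) :=
    hJ0.le.trans (pow_le_pow_right₀ (by linarith) (by omega))
  obtain ⟨n₀, hn₀⟩ := GFFProof.exists_n0 d hd N α β hα hβ hNmono (J0 + 2)
  refine ⟨n₀, fun n hn x R hR1 hR ht y hy => ?_⟩
  have hy' : (G n).dist x y ≤ R := hy
  obtain ⟨h, h0, hs, h1, hM, hI⟩ := GFFProof.walk_main hd (hconn n) (hreg n) (hW n) x R ht y hy'
  have hM0 : 0 ≤ ((d : ℝ) - 1) ^ ((G n).dist x y) / ((d : ℝ) - 1) ^ R := by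
    have : (0 : ℝ) < d - 1 := by linarith
    positivity
  have hE := GFFProof.energy_bound (G n) x d hd (hconn n) (hreg n) β hβ.1 (hgap n) _ R (J0 + 2) hR1
    (by omega) (hn₀ n hn R hR) (hcyc n x) ht hJ h _ hM0 h0 hs h1 hM
  rw [hcard n] at hE
  have hF := GFFProof.final_num d hd R ((G n).dist x y)
  simp only [hI]
  rw [SimpleGraph.dist_comm (u := y)]
  refine le_trans ?_ hF
  refine GFFProof.gauss_var (μ n) _ (hμ n) h _ ?_ hE
  have : (0 : ℝ) < d - 2 := by linarith
  positivity
end
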